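/- Let λ/μ be a skew shape with λ, μ partitions with at most n parts and take the full flag Φ = (n, n, …, n). Then g_{λ/μ}(X_Φ; t) = Σ_{α ∈ ℤ₊ⁿ} t^α Σ_Q s_{sh(Q)}(x_1,…,x_n), where for each α the inner sum runs over all (λ/μ, (n,…,n))-compatible tableaux Q for RPP with ceq(Q) = α; that is, the refined dual stable Grothendieck polynomial g̃_{λ/μ}(x; t) equals Σ_{Q ∈ 𝕋(λ/μ)} t^{ceq(Q)} s_{sh(Q)}(x), a tableaux Schur expansion. -/

import Mathlib

/-!
Common combinatorial framework for flagged refined stable Grothendieck polynomials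
of skew shapes: skew shapes, semistandard set-valued tableaux, the signature-rule
crystal operators, reading words, Knuth equivalence, the Burge correspondence and
the Chan–Pflueger skew set-valued row insertion (as interfaces), Demazure crystals
and key polynomials.
-/

open Classical

attribute [local instance 2000] Classical.propDecidable

noncomputable section

namespace SkewG

/-! ### Cells and shapes -/

/-- A cell `(i, j)`: row `i`, column `j` (both 0-indexed). -/
abbrev Cell : Type := ℕ × ℕ

/-- A finite set of cells is the Young diagram of a partition iff it is a lower set. -/
def IsPartitionShape (s : Finset Cell) : Prop :=
  ∀ i j i' j', (i, j) ∈ s → i' ≤ i → j' ≤ j → (i', j') ∈ s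

/-- The shape has at most `n` parts (rows `0, …, n-1`). -/
def AtMostRows (s : Finset Cell) (n : ℕ) : Prop := ∀ c ∈ s, c.1 < n

/-- Two cells share a side. -/
def Adj (c d : Cell) : Prop :=
  (c.1 = d.1 ∧ (c.2 = d.2 + 1 ∨ d.2 = c.2 + 1)) ∨
  (c.2 = d.2 ∧ (c.1 = d.1 + 1 ∨ d.1 = c.1 + 1))

/-- Any two boxes of `s` are linked by a path inside `s`. -/
def ConnectedShape (s : Finset Cell) : Prop :=
  ∀ c ∈ s, ∀ d ∈ s,
    Relation.ReflTransGen (fun a b => a ∈ s ∧ b ∈ s ∧ Adj a b) c d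

/-- `s` is a skew shape `λ/μ`. -/
def IsSkewShape (s : Finset Cell) : Prop :=
  ∃ lam mu : Finset Cell, IsPartitionShape lam ∧ IsPartitionShape mu ∧
    mu ⊆ lam ∧ s = lam \ mu

/-! ### Tableaux -/

/-- A semistandard set-valued tableau on the cell set `s`, with entries in `{1, …, n}`:
nonempty sets on `s`, empty outside, rows weakly increasing, columns strictly increasing. -/
def IsSVTOn (n : ℕ) (s : Finset Cell) (T : Cell → Finset ℕ) : Prop :=
  (∀ c ∈ s, (T c).Nonempty) ∧
  (∀ c, c ∉ s → T c = ∅) ∧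
  (∀ c, ∀ x ∈ T c, 1 ≤ x ∧ x ≤ n) ∧
  (∀ i j, (i, j) ∈ s → (i, j + 1) ∈ s →
    ∀ x ∈ T (i, j), ∀ y ∈ T (i, j + 1), x ≤ y) ∧
  (∀ i j, (i, j) ∈ s → (i + 1, j) ∈ s →
    ∀ x ∈ T (i, j), ∀ y ∈ T (i + 1, j), x < y)

/-- An ordinary (single-valued) semistandard Young tableau on `s`; `0` outside `s`. -/
def IsSSYTOn (s : Finset Cell) (T : Cell → ℕ) : Prop :=
  (∀ c ∈ s, 1 ≤ T c) ∧
  (∀ c, c ∉ s → T c = 0) ∧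
  (∀ i j, (i, j) ∈ s → (i, j + 1) ∈ s → T (i, j) ≤ T (i, j + 1)) ∧
  (∀ i j, (i, j) ∈ s → (i + 1, j) ∈ s → T (i, j) < T (i + 1, j))

/-- A reverse row-strict tableau: rows strictly decreasing, columns weakly decreasing. -/
def IsRevRowStrictOn (s : Finset Cell) (T : Cell → ℕ) : Prop :=
  (∀ c ∈ s, 1 ≤ T c) ∧
  (∀ c, c ∉ s → T c = 0) ∧
  (∀ i j, (i, j) ∈ s → (i, j + 1) ∈ s → T (i, j + 1) < T (i, j)) ∧
  (∀ i j, (i, j) ∈ s → (i + 1, j) ∈ s → T (i + 1, j) ≤ T (i, j))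

/-- Row bounded: entries in (0-indexed) row `i` — i.e. row `i+1` — are `< i+1`. -/
def IsRowBounded (s : Finset Cell) (T : Cell → ℕ) : Prop :=
  ∀ c ∈ s, T c ≤ c.1

/-- Row weakly bounded: entries in row `i+1` (1-indexed) are `≤ i+1`. -/
def IsRowWeaklyBounded (s : Finset Cell) (T : Cell → ℕ) : Prop :=
  ∀ c ∈ s, T c ≤ c.1 + 1

/-- Number of occurrences of the letter `v` in a set-valued tableau. -/
def wtOn (s : Finset Cell) (T : Cell → Finset ℕ) (v : ℕ) : ℕ :=
  ∑ c ∈ s, if v ∈ T c then 1 else 0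

/-- Number of occurrences of the letter `v` in a single-valued tableau. -/
def wtS (s : Finset Cell) (T : Cell → ℕ) (v : ℕ) : ℕ :=
  ∑ c ∈ s, if T c = v then 1 else 0

/-- Excess in (0-indexed) row `i`: number of entries minus number of boxes. -/
def exRow (s : Finset Cell) (T : Cell → Finset ℕ) (i : ℕ) : ℕ :=
  (∑ c ∈ s.filter (fun c => c.1 = i), (T c).card) - (s.filter (fun c => c.1 = i)).card

/-- Total excess `|ex(T)|`. -/
def exTotal (s : Finset Cell) (T : Cell → Finset ℕ) : ℕ :=
  (∑ c ∈ s, (T c).card) - s.card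

/-- A flag (0-indexed): weakly increasing on rows `0, …, n-1`, positive, with `Φ (n-1) = n`. -/
def IsFlag (n : ℕ) (Φ : ℕ → ℕ) : Prop :=
  (∀ i j, i ≤ j → j < n → Φ i ≤ Φ j) ∧ (∀ i, i < n → 1 ≤ Φ i) ∧ Φ (n - 1) = n

/-- A set-valued tableau respects the flag `Φ`: entries of row `i` are at most `Φ i`. -/
def RespectsFlag (Φ : ℕ → ℕ) (T : Cell → Finset ℕ) : Prop :=
  ∀ i j, ∀ x ∈ T (i, j), x ≤ Φ i

/-- A single-valued tableau on `s` respects the flag `Φ`. -/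
def RespectsFlagS (s : Finset Cell) (Φ : ℕ → ℕ) (T : Cell → ℕ) : Prop :=
  ∀ c ∈ s, T c ≤ Φ c.1

/-- View a single-valued tableau as a set-valued one. -/
def svtOf (T : Cell → ℕ) : Cell → Finset ℕ := fun c => if T c = 0 then ∅ else {T c}

/-! ### The signature-rule crystal operators on set-valued fillings -/

def colHas (T : Cell → Finset ℕ) (v j : ℕ) : Prop := ∃ i, v ∈ T (i, j)

/-- Column `j` gets a `+` for the letter `v`: it contains `v` but not `v+1`. -/
def IsPlusCol (T : Cell → Finset ℕ) (v j : ℕ) : Prop := colHas T v j ∧ ¬ colHas T (v + 1) j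

/-- Column `j` gets a `-` for the letter `v`: it contains `v+1` but not `v`. -/
def IsMinusCol (T : Cell → Finset ℕ) (v j : ℕ) : Prop := colHas T (v + 1) j ∧ ¬ colHas T v j

def plusCount (T : Cell → Finset ℕ) (v a b : ℕ) : ℕ :=
  ((Finset.Ico a b).filter (fun j => IsPlusCol T v j)).card

def minusCount (T : Cell → Finset ℕ) (v a b : ℕ) : ℕ :=
  ((Finset.Ico a b).filter (fun j => IsMinusCol T v j)).card

/-- The `+` above column `j` survives the successive cancellation of `(-,+)` pairs. -/
def UnmatchedPlus (T : Cell → Finset ℕ) (v j : ℕ) : Prop :=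
  IsPlusCol T v j ∧ minusCount T v 0 j < plusCount T v 0 (j + 1)

/-- The `-` above column `j` survives the successive cancellation of `(-,+)` pairs. -/
def UnmatchedMinus (T : Cell → Finset ℕ) (v j : ℕ) : Prop :=
  IsMinusCol T v j ∧ ∀ b, plusCount T v (j + 1) b ≤ minusCount T v (j + 1) b

/-- The lowering operator `f_v` on raw set-valued fillings (`none` encodes `0`). -/
def fFill (v : ℕ) (T : Cell → Finset ℕ) : Option (Cell → Finset ℕ) :=
  if h : ∃ j, UnmatchedPlus T v j then
    letI j := sSup {j | UnmatchedPlus T v j}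
    if hr : ∃ i, v ∈ T (i, j) then
      letI r := Classical.choose hr
      if v ∈ T (r, j + 1) then
        some (fun c =>
          if c = (r, j + 1) then (T c).erase v
          else if c = (r, j) then insert (v + 1) (T c)
          else T c)
      else
        some (fun c => if c = (r, j) then insert (v + 1) ((T c).erase v) else T c)
    else none
  else none

/-- The raising operator `e_v` on raw set-valued fillings (`none` encodes `0`). -/
def eFill (v : ℕ) (T : Cell → Finset ℕ) : Option (Cell → Finset ℕ) :=
  if h : ∃ j, UnmatchedMinus T v j then
    letI j := sInf {j | UnmatchedMinus T v j}
    if hr : ∃ i, (v + 1) ∈ T (i, j) then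
      letI r := Classical.choose hr
      if 1 ≤ j ∧ (v + 1) ∈ T (r, j - 1) then
        some (fun c =>
          if c = (r, j - 1) then (T c).erase (v + 1)
          else if c = (r, j) then insert v (T c)
          else T c)
      else
        some (fun c => if c = (r, j) then insert v ((T c).erase (v + 1)) else T c)
    else none
  else none

def fIter (v : ℕ) : ℕ → (Cell → Finset ℕ) → Option (Cell → Finset ℕ)
  | 0, T => some T
  | k + 1, T => (fIter v k T).bind (fFill v)

def eIter (v : ℕ) : ℕ → (Cell → Finset ℕ) → Option (Cell → Finset ℕ)
  | 0, T => some T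
  | k + 1, T => (eIter v k T).bind (eFill v)

/-- `φ_v(T) = max {k | f_v^k T ≠ 0}`. -/
def phiOp (v : ℕ) (T : Cell → Finset ℕ) : ℕ := sSup {k | (fIter v k T).isSome}

/-- `ε_v(T) = max {k | e_v^k T ≠ 0}`. -/
def epsOp (v : ℕ) (T : Cell → Finset ℕ) : ℕ := sSup {k | (eIter v k T).isSome}

/-- A highest weight element: killed by all raising operators. -/
def HighestWeight (n : ℕ) (T : Cell → Finset ℕ) : Prop :=
  ∀ v, 1 ≤ v → v + 1 ≤ n → eFill v T = none

/-- One step of the crystal graph (in either direction). -/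
def CrystRel (n : ℕ) (T U : Cell → Finset ℕ) : Prop :=
  ∃ v, 1 ≤ v ∧ v + 1 ≤ n ∧ (fFill v T = some U ∨ fFill v U = some T)

/-- The connected component of `S'` inside a subset `X` of a crystal. -/
def ComponentOf (n : ℕ) (X : Set (Cell → Finset ℕ)) (S' : Cell → Finset ℕ) :
    Set (Cell → Finset ℕ) :=
  {T | T ∈ X ∧ Relation.ReflTransGen (fun a b => a ∈ X ∧ b ∈ X ∧ CrystRel n a b) S' T}

/-! ### Words -/

/-- Columns of row `i` of `s`, listed from left to right. -/
def rowList (s : Finset Cell) (i : ℕ) : List ℕ :=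
  (List.range (s.sup Prod.snd + 1)).filter (fun j => decide ((i, j) ∈ s))

def rowLenOf (s : Finset Cell) (i : ℕ) : ℕ := (rowList s i).length

def rowWordOn (s : Finset Cell) (T : Cell → ℕ) (i : ℕ) : List ℕ :=
  (rowList s i).map (fun j => T (i, j))

/-- The row reading word: rows bottom to top, each row left to right. -/
def readingWordOn (s : Finset Cell) (T : Cell → ℕ) : List ℕ :=
  ((List.range (s.sup Prod.fst + 1)).reverse.map (rowWordOn s T)).flatten

/-- The word `b(s)`: `(row length of row i)` copies of the letter `i+1`,
rows listed from the bottom up. -/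
def bwordOn (s : Finset Cell) : List ℕ :=
  ((List.range (s.sup Prod.fst + 1)).reverse.map
    (fun i => List.replicate (rowList s i).length (i + 1))).flatten

/-- The word `b(α)` of a composition: `α i` copies of the letter `i+1`, decreasing letters. -/
def bwordComp (n : ℕ) (α : ℕ → ℕ) : List ℕ :=
  ((List.range n).reverse.map (fun i => List.replicate (α i) (i + 1))).flatten

/-- Elementary Knuth moves. -/
inductive KnuthStep : List ℕ → List ℕ → Prop
  | kxzy (u w : List ℕ) (x y z : ℕ) (h1 : x ≤ y) (h2 : y < z) :
      KnuthStep (u ++ x :: z :: y :: w) (u ++ z :: x :: y :: w)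
  | kyxz (u w : List ℕ) (x y z : ℕ) (h1 : x < y) (h2 : y ≤ z) :
      KnuthStep (u ++ y :: x :: z :: w) (u ++ y :: z :: x :: w)

/-- Knuth (plactic) equivalence of words. -/
def KnuthEquiv : List ℕ → List ℕ → Prop := Relation.EqvGen KnuthStep

/-- Yamanouchi word: in every suffix, `v+1` occurs at least as often as `v+2`. -/
def IsYamanouchi (w : List ℕ) : Prop :=
  ∀ k v, (w.drop k).count (v + 2) ≤ (w.drop k).count (v + 1)

/-- The biword conditions (columns listed left to right with weakly decreasing top row,
strictly decreasing the top whenever the bottom strictly decreases). -/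
def IsBiword (top bot : List ℕ) : Prop :=
  top.length = bot.length ∧
  (∀ x ∈ top, 1 ≤ x) ∧ (∀ x ∈ bot, 1 ≤ x) ∧
  ∀ p, p + 1 < top.length →
    top.getD (p + 1) 0 ≤ top.getD p 0 ∧
    (bot.getD (p + 1) 0 < bot.getD p 0 → top.getD (p + 1) 0 < top.getD p 0)

/-! ### Sorting, Demazure crystals -/

/-- The `i`-th largest value (0-indexed) among `α 0, …, α (n-1)`: the decreasing
rearrangement `α†`. -/
def dsort (n : ℕ) (α : ℕ → ℕ) (i : ℕ) : ℕ :=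
  sSup {m | i < ((Finset.range n).filter (fun k => m ≤ α k)).card}

/-- The Young diagram of a weakly decreasing function. -/
def diagOf (n : ℕ) (f : ℕ → ℕ) : Finset Cell :=
  (Finset.product (Finset.range n) (Finset.range (f 0))).filter (fun c => c.2 < f c.1)

/-- product of simple transpositions `s_{i} = (i, i+1)` (0-indexed coordinates). -/
def permOfWord (is : List ℕ) : Equiv.Perm ℕ :=
  (is.map (fun i => Equiv.swap i (i + 1))).prod

def IsReducedWord (τ : Equiv.Perm ℕ) (is : List ℕ) : Prop :=
  permOfWord is = τ ∧ ∀ js : List ℕ, permOfWord js = τ → is.length ≤ js.length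

/-- `τ • α` with `(τ • α) (τ i) = α i`. -/
def permuteComp (τ : Equiv.Perm ℕ) (f : ℕ → ℕ) : ℕ → ℕ := fun i => f (τ.symm i)

/-- The unique SSYT of partition shape `sh` whose weight equals its shape
(`i+1`'s in row `i`). -/
def highestTabOf (sh : Finset Cell) : Cell → ℕ := fun c => if c ∈ sh then c.1 + 1 else 0

/-- Apply `f_{i₁}^{k₁} ∘ ⋯ ∘ f_{i_p}^{k_p}` (rightmost factor first); the letters of the
first list are crystal indices. -/
def applyF : List ℕ → List ℕ → (Cell → Finset ℕ) → Option (Cell → Finset ℕ)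
  | [], _, T => some T
  | _ :: _, [], T => some T
  | i :: is, k :: ks, T => (applyF is ks T).bind (fIter i k)

/-- The Demazure crystal `B_w(sh)` (as a set of set-valued fillings all of whose
values are singletons), for a given word for `w`; the word is a list of crystal
indices `i` (acting on the letters `i, i+1`). -/
def DemazureSet (sh : Finset Cell) (word : List ℕ) : Set (Cell → Finset ℕ) :=
  {T | ∃ ks : List ℕ, ks.length = word.length ∧
        applyF word ks (svtOf (highestTabOf sh)) = some T}

/-! ### Key polynomials via Demazure operators -/

/-- `T_i` applied to a monomial `x^a` (the exact quotient
`(x_i x^a - x_{i+1} s_i x^a)/(x_i - x_{i+1})`), written as an explicit sum. -/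
def demMono (n : ℕ) (i : ℕ) (h : i + 1 < n) (a : Fin n →₀ ℕ) : MvPolynomial (Fin n) ℤ :=
  letI i0 : Fin n := ⟨i, Nat.lt_of_succ_lt h⟩
  letI i1 : Fin n := ⟨i + 1, h⟩
  letI p := a i0
  letI q := a i1
  if q ≤ p then
    ∑ m ∈ Finset.Icc q p,
      MvPolynomial.monomial ((a.update i0 m).update i1 (p + q - m)) (1 : ℤ)
  else
    - ∑ m ∈ Finset.Ico (p + 1) q,
      MvPolynomial.monomial ((a.update i0 m).update i1 (p + q - m)) (1 : ℤ)

/-- The Demazure operator `T_i` (0-indexed: acts on the variables `x_i, x_{i+1}`). -/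
def demOp (n : ℕ) (i : ℕ) (f : MvPolynomial (Fin n) ℤ) : MvPolynomial (Fin n) ℤ :=
  if h : i + 1 < n then
    ∑ a ∈ f.support, MvPolynomial.C (MvPolynomial.coeff a f) * demMono n i h a
  else f

/-- `T_w` along a word (leftmost letter applied last). -/
def demWord (n : ℕ) : List ℕ → MvPolynomial (Fin n) ℤ → MvPolynomial (Fin n) ℤ
  | [], f => f
  | i :: is, f => demOp n i (demWord n is f)

/-- The monomial `x^α` (coordinate `i` of `Fin n` carries `α i`). -/
def xMono (n : ℕ) (α : ℕ → ℕ) : MvPolynomial (Fin n) ℤ :=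
  ∏ i : Fin n, MvPolynomial.X i ^ α (i : ℕ)

/-- The key polynomial `κ_α = T_w x^{α†}` for (any) reduced word of a permutation `w`
with `w • α† = α`. -/
def keyPoly (n : ℕ) (α : ℕ → ℕ) : MvPolynomial (Fin n) ℤ :=
  if h : ∃ is : List ℕ, IsReducedWord (permOfWord is) is ∧
      (∀ i, i < n → permuteComp (permOfWord is) (dsort n α) i = α i)
  then demWord n h.choose (xMono n (dsort n α))
  else 0

/-! ### Generating polynomials -/

abbrev XPoly (n : ℕ) := MvPolynomial (Fin n) ℤ
abbrev XTPoly (n : ℕ) := MvPolynomial (Fin n) (MvPolynomial (Fin n) ℤ)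

/-- Embed an `x`-polynomial into the ring `ℤ[t][x]`. -/
def liftX (n : ℕ) (f : XPoly n) : XTPoly n :=
  MvPolynomial.map (MvPolynomial.C : ℤ →+* MvPolynomial (Fin n) ℤ) f

/-- The monomial `t^α` inside `ℤ[t][x]` (as a constant in the `x`-variables). -/
def tMono (n : ℕ) (α : ℕ → ℕ) : XTPoly n :=
  MvPolynomial.C (∏ i : Fin n, MvPolynomial.X i ^ α (i : ℕ))

/-- The monomial `x^{wt T}` for a set-valued tableau, inside `ℤ[t][x]`. -/
def xWt (n : ℕ) (s : Finset Cell) (T : Cell → Finset ℕ) : XTPoly n :=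
  ∏ i : Fin n, MvPolynomial.X i ^ wtOn s T ((i : ℕ) + 1)

/-- extend a `Fin n`-indexed composition by zero. -/
def extendf (n : ℕ) (α : Fin n → ℕ) : ℕ → ℕ :=
  fun r => if h : r < n then α ⟨r, h⟩ else 0

/-- The flagged refined skew stable Grothendieck polynomial
`G_{λ/μ}(X_Φ; t) = Σ_T (-1)^{|ex T|} t^{ex T} x^{wt T}`. -/
def Gflagged (n : ℕ) (s : Finset Cell) (Φ : ℕ → ℕ) : XTPoly n :=
  ∑ᶠ T : {T : Cell → Finset ℕ // IsSVTOn n s T ∧ RespectsFlag Φ T},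
    ((-1 : XTPoly n) ^ exTotal s T.1) * tMono n (exRow s T.1) * xWt n s T.1

/-- The flagged skew Schur polynomial `s_{λ/μ}(X_Φ)`. -/
def sFlagged (n : ℕ) (s : Finset Cell) (Φ : ℕ → ℕ) : XPoly n :=
  ∑ᶠ U : {U : Cell → ℕ // IsSSYTOn s U ∧ (∀ c ∈ s, U c ≤ n) ∧ RespectsFlagS s Φ U},
    ∏ i : Fin n, MvPolynomial.X i ^ wtS s U.1 ((i : ℕ) + 1)

/-- The Schur polynomial `s_ν(x_1, …, x_n)` of a partition shape. -/
def schurOf (n : ℕ) (sh : Finset Cell) : XPoly n :=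
  ∑ᶠ U : {U : Cell → ℕ // IsSSYTOn sh U ∧ ∀ c ∈ sh, U c ≤ n},
    ∏ i : Fin n, MvPolynomial.X i ^ wtS sh U.1 ((i : ℕ) + 1)

/-- The stable Grothendieck polynomial `G_ν(x_1,…,x_n) = RG_ν(x; 1)`. -/
def RGone (n : ℕ) (sh : Finset Cell) : XPoly n :=
  ∑ᶠ T : {T : Cell → Finset ℕ // IsSVTOn n sh T},
    ((-1 : XPoly n) ^ exTotal sh T.1) *
      ∏ i : Fin n, MvPolynomial.X i ^ wtOn sh T.1 ((i : ℕ) + 1)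

/-! ### Reverse plane partitions -/

/-- A reverse plane partition on `s` (weakly increasing rows and columns, `0` outside). -/
def IsRPPOn (s : Finset Cell) (R : Cell → ℕ) : Prop :=
  (∀ c ∈ s, 1 ≤ R c) ∧ (∀ c, c ∉ s → R c = 0) ∧
  (∀ i j, (i, j) ∈ s → (i, j + 1) ∈ s → R (i, j) ≤ R (i, j + 1)) ∧
  (∀ i j, (i, j) ∈ s → (i + 1, j) ∈ s → R (i, j) ≤ R (i + 1, j))

/-- `wt(R) v` = number of columns of `R` containing `v`. -/
def wtRPP (s : Finset Cell) (R : Cell → ℕ) (v : ℕ) : ℕ :=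
  ((Finset.range (s.sup Prod.snd + 1)).filter
    (fun j => ∃ i, (i, j) ∈ s ∧ R (i, j) = v)).card

/-- `ceq(R) i` = number of boxes of row `i` whose entry equals the entry just below. -/
def ceqOn (s : Finset Cell) (R : Cell → ℕ) (i : ℕ) : ℕ :=
  (s.filter (fun c => c.1 = i ∧ (c.1 + 1, c.2) ∈ s ∧ R c = R (c.1 + 1, c.2))).card

/-- The dual stable Grothendieck polynomial `g_ν(x_1,…,x_n)`. -/
def gDual (n : ℕ) (sh : Finset Cell) : XPoly n :=
  ∑ᶠ R : {R : Cell → ℕ // IsRPPOn sh R ∧ ∀ c ∈ sh, R c ≤ n},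
    ∏ i : Fin n, MvPolynomial.X i ^ wtRPP sh R.1 ((i : ℕ) + 1)

/-- The flagged refined dual stable Grothendieck polynomial
`g_{λ/μ}(X_Φ; t) = Σ_R t^{ceq R} x^{wt R}`. -/
def gFlagged (n : ℕ) (s : Finset Cell) (Φ : ℕ → ℕ) : XTPoly n :=
  ∑ᶠ R : {R : Cell → ℕ // IsRPPOn s R ∧ RespectsFlagS s Φ R},
    tMono n (ceqOn s R.1) * ∏ i : Fin n, MvPolynomial.X i ^ wtRPP s R.1 ((i : ℕ) + 1)

/-- A cell is circled in an RPP: topmost occurrence of its letter in its column. -/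
def rppCircled (s : Finset Cell) (R : Cell → ℕ) (c : Cell) : Prop :=
  c ∈ s ∧ (c.1 = 0 ∨ (c.1 - 1, c.2) ∉ s ∨ R (c.1 - 1, c.2) ≠ R c)

/-- The reading word `w(R)` of an RPP: circled entries, bottom row up, left to right. -/
def rppReadingWord (s : Finset Cell) (R : Cell → ℕ) : List ℕ :=
  ((List.range (s.sup Prod.fst + 1)).reverse.map (fun i =>
    ((rowList s i).filter (fun j => decide (rppCircled s R (i, j)))).map
      (fun j => R (i, j)))).flatten

/-- The row reading word `r_T` of an RPP: omit entries equal to the entry just below,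
read rows bottom to top, left to right. -/
def rppRowWord (s : Finset Cell) (R : Cell → ℕ) : List ℕ :=
  ((List.range (s.sup Prod.fst + 1)).reverse.map (fun i =>
    ((rowList s i).filter (fun j => decide ((i + 1, j) ∉ s ∨ R (i + 1, j) ≠ R (i, j)))).map
      (fun j => R (i, j)))).flatten

/-- The height word `h(T)`: the (1-indexed) row numbers of the letters of `r_T`. -/
def rppHeights (s : Finset Cell) (R : Cell → ℕ) : List ℕ :=
  ((List.range (s.sup Prod.fst + 1)).reverse.map (fun i =>
    ((rowList s i).filter (fun j => decide ((i + 1, j) ∉ s ∨ R (i + 1, j) ≠ R (i, j)))).map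
      (fun _ => i + 1))).flatten

/-- minimum entry of a box. -/
def boxMin (A : Finset ℕ) : ℕ := sInf (A : Set ℕ)

/-- non-minimal entries of a box, largest first. -/
def boxExtras (A : Finset ℕ) : List ℕ :=
  ((List.range (A.sup id + 1)).filter (fun x => decide (x ∈ A ∧ x ≠ boxMin A))).reverse

/-- The reading word `w(S)` of a set-valued tableau: rows bottom to top; in each row
first the non-minimal entries, boxes right to left (largest to smallest within a box),
then the minimal entries, boxes left to right. -/
def svtReadingWord (s : Finset Cell) (T : Cell → Finset ℕ) : List ℕ :=
  ((List.range (s.sup Prod.fst + 1)).reverse.map (fun i =>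
    (((rowList s i).reverse.map (fun j => boxExtras (T (i, j)))).flatten) ++
      ((rowList s i).map (fun j => boxMin (T (i, j)))))).flatten

/-! ### The `*`-composition of shapes and tableaux -/

def minRowOf (s : Finset Cell) : ℕ := sInf (Prod.fst '' (s : Set Cell))
def minColOf (s : Finset Cell) : ℕ := sInf (Prod.snd '' (s : Set Cell))

def rowSpan (s : Finset Cell) : ℕ := if s = ∅ then 0 else s.sup Prod.fst + 1 - minRowOf s
def colSpan (s : Finset Cell) : ℕ := if s = ∅ then 0 else s.sup Prod.snd + 1 - minColOf s

def rowOffset (shapes : List (Finset Cell)) (i : ℕ) : ℕ := ((shapes.take i).map rowSpan).sum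
def colOffset (shapes : List (Finset Cell)) (i : ℕ) : ℕ :=
  ((shapes.drop (i + 1)).map colSpan).sum

def embedCell (shapes : List (Finset Cell)) (i : ℕ) (c : Cell) : Cell :=
  (rowOffset shapes i + (c.1 - minRowOf (shapes.getD i ∅)),
   colOffset shapes i + (c.2 - minColOf (shapes.getD i ∅)))

def unembedCell (shapes : List (Finset Cell)) (i : ℕ) (c : Cell) : Cell :=
  (c.1 - rowOffset shapes i + minRowOf (shapes.getD i ∅),
   c.2 - colOffset shapes i + minColOf (shapes.getD i ∅))

/-- `θ_k * ⋯ * θ_1` (the list is ordered from the top component down). -/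
def compositeShape (shapes : List (Finset Cell)) : Finset Cell :=
  (Finset.range shapes.length).biUnion (fun i => (shapes.getD i ∅).image (embedCell shapes i))

/-- `T_k * ⋯ * T_1`. -/
def compositeTab (shapes : List (Finset Cell)) (Ts : List (Cell → ℕ)) : Cell → ℕ :=
  fun c => ∑ i ∈ Finset.range shapes.length,
    if unembedCell shapes i c ∈ shapes.getD i ∅ ∧
        embedCell shapes i (unembedCell shapes i c) = c
    then Ts.getD i (fun _ => 0) (unembedCell shapes i c) else 0

/-- `φ_1 * ⋯ * φ_k`: concatenation of flags along the row blocks of the components. -/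
def compositeFlag (shapes : List (Finset Cell)) (flags : List (ℕ → ℕ)) : ℕ → ℕ :=
  fun r => ∑ i ∈ Finset.range shapes.length,
    if rowOffset shapes i ≤ r ∧ r < rowOffset shapes i + rowSpan (shapes.getD i ∅)
    then flags.getD i (fun _ => 0) (r - rowOffset shapes i) else 0

/-- `comps` is the list of connected components of `s`, from the top down. -/
def IsComponents (s : Finset Cell) (comps : List (Finset Cell)) : Prop :=
  (∀ c, c ∈ s ↔ ∃ i < comps.length, c ∈ comps.getD i ∅) ∧
  (∀ i, i < comps.length → (comps.getD i ∅).Nonempty) ∧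
  (∀ i, i < comps.length → ConnectedShape (comps.getD i ∅)) ∧
  (∀ i j, i < j → j < comps.length →
    ∀ c ∈ comps.getD i ∅, ∀ d ∈ comps.getD j ∅, c.1 < d.1) ∧
  (∀ i j, i < comps.length → j < comps.length → i ≠ j →
    ∀ c ∈ comps.getD i ∅, ∀ d ∈ comps.getD j ∅, ¬ Adj c d)

/-- Restrict a filling to a sub-shape. -/
def restrict (u : Finset Cell) (T : Cell → Finset ℕ) : Cell → Finset ℕ :=
  fun c => if c ∈ u then T c else ∅

/-! ### The Burge correspondence (interface) -/

structure BurgeOut where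
  sh : Finset Cell
  P : Cell → ℕ
  Q : Cell → ℕ

/-- The Burge correspondence: a bijection between biwords and pairs of semistandard
Young tableaux of the same partition shape, the insertion tableau `P` being Knuth
equivalent to the bottom word and the recording tableau `Q` having the content of the
top word. -/
structure BurgeData where
  out : List ℕ → List ℕ → BurgeOut
  shape_part : ∀ top bot, IsBiword top bot → IsPartitionShape (out top bot).sh
  ssytP : ∀ top bot, IsBiword top bot → IsSSYTOn (out top bot).sh (out top bot).P
  ssytQ : ∀ top bot, IsBiword top bot → IsSSYTOn (out top bot).sh (out top bot).Q
  knuthP : ∀ top bot, IsBiword top bot →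
    KnuthEquiv (readingWordOn (out top bot).sh (out top bot).P) bot
  contentP : ∀ top bot, IsBiword top bot →
    ∀ v, wtS (out top bot).sh (out top bot).P v = bot.count v
  contentQ : ∀ top bot, IsBiword top bot →
    ∀ v, wtS (out top bot).sh (out top bot).Q v = top.count v
  inj : ∀ top bot top' bot', IsBiword top bot → IsBiword top' bot' →
    out top bot = out top' bot' → top = top' ∧ bot = bot'
  surj : ∀ (sh : Finset Cell) (P Q : Cell → ℕ), IsPartitionShape sh →
    IsSSYTOn sh P → IsSSYTOn sh Q →
    ∃ top bot, IsBiword top bot ∧ out top bot = ⟨sh, P, Q⟩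

/-! ### The Chan–Pflueger skew set-valued row insertion (interface) -/

structure CPOut where
  sTil : Finset Cell
  Q : Cell → ℕ
  Til : Cell → ℕ

/-- The conditions satisfied by the output `(θ̃, Q'', T̃)` of the Chan–Pflueger
insertion applied to a set-valued tableau of connected skew shape `s` with excess `e`. -/
def CPTarget (n : ℕ) (s : Finset Cell) (e : ℕ → ℕ) (o : CPOut) : Prop :=
  s ⊆ o.sTil ∧ IsSkewShape o.sTil ∧ ConnectedShape o.sTil ∧
  (∀ c ∈ o.sTil, ∃ r, (r, c.2) ∈ s) ∧
  (∀ c ∈ o.sTil, c ∉ s → ∃ r, r < c.1 ∧ (r, c.2) ∈ s) ∧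
  IsRevRowStrictOn (o.sTil \ s) o.Q ∧ IsRowBounded (o.sTil \ s) o.Q ∧
  (∀ r, wtS (o.sTil \ s) o.Q (r + 1) = e r) ∧
  IsSSYTOn o.sTil o.Til ∧ (∀ c ∈ o.sTil, o.Til c ≤ n)

/-- Interface for the Chan–Pflueger skew set-valued row insertion (Algorithm 3.12 of
Chan–Pflueger): for each set-valued tableau `T` of connected skew shape `s` it
produces the final output `out s T = (θ̃, Q'', T̃)` together with the full sequence of
intermediate set-valued tableaux `steps s T`, each step adding one box. -/
structure CPData (n : ℕ) where
  out : Finset Cell → (Cell → Finset ℕ) → CPOut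
  steps : Finset Cell → (Cell → Finset ℕ) → List (Finset Cell × (Cell → Finset ℕ))
  valid : ∀ s T, IsSkewShape s → ConnectedShape s → IsSVTOn n s T →
    CPTarget n s (exRow s T) (out s T) ∧
    (∀ v, wtS (out s T).sTil (out s T).Til v = wtOn s T v)
  steps_first : ∀ s T, IsSkewShape s → ConnectedShape s → IsSVTOn n s T →
    (steps s T).head? = some (s, T)
  steps_last : ∀ s T, IsSkewShape s → ConnectedShape s → IsSVTOn n s T →
    (steps s T).getLast? = some ((out s T).sTil, svtOf (out s T).Til)
  steps_svt : ∀ s T, IsSkewShape s → ConnectedShape s → IsSVTOn n s T →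
    ∀ p ∈ steps s T, IsSVTOn n p.1 p.2
  steps_len : ∀ s T, IsSkewShape s → ConnectedShape s → IsSVTOn n s T →
    (steps s T).length = exTotal s T + 1
  steps_add : ∀ s T, IsSkewShape s → ConnectedShape s → IsSVTOn n s T →
    ∀ j, j + 1 < (steps s T).length →
      ((steps s T).getD j (∅, fun _ => ∅)).1 ⊆ ((steps s T).getD (j + 1) (∅, fun _ => ∅)).1 ∧
      (((steps s T).getD (j + 1) (∅, fun _ => ∅)).1 \
        ((steps s T).getD j (∅, fun _ => ∅)).1).card = 1
  bij : ∀ s, IsSkewShape s → ConnectedShape s → ∀ (e : ℕ → ℕ) (o : CPOut),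
    CPTarget n s e o →
    ∃! T : {T : Cell → Finset ℕ // IsSVTOn n s T ∧ ∀ r, exRow s T r = e r}, out s T.1 = o

/-- The rows (0-indexed) of the boxes added at the successive steps of the insertion. -/
def addedRows (n : ℕ) (cp : CPData n) (s : Finset Cell) (T : Cell → Finset ℕ) : List ℕ :=
  (List.range ((cp.steps s T).length - 1)).map (fun j =>
    ((((cp.steps s T).getD (j + 1) (∅, fun _ => ∅)).1 \
      (((cp.steps s T).getD j (∅, fun _ => ∅)).1)).sup Prod.fst))

/-- The sequence of flags `Φ^{(j)}`: when a box is added in (0-indexed) row `r`, the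
flag value of row `r` is replaced by the flag value of row `r - 1`. -/
def flagSeq (Φ : ℕ → ℕ) (ks : List ℕ) : ℕ → (ℕ → ℕ)
  | 0 => Φ
  | j + 1 => fun r => if r = ks.getD j 0 then flagSeq Φ ks j (r - 1) else flagSeq Φ ks j r

/-- The flag `Φ̃` induced by the insertion of `T`. -/
def inducedFlag (n : ℕ) (cp : CPData n) (s : Finset Cell) (T : Cell → Finset ℕ)
    (Φ : ℕ → ℕ) : ℕ → ℕ :=
  flagSeq Φ (addedRows n cp s T) (addedRows n cp s T).length

/-! ### Compatible tableaux for SVT -/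

def compTilShapes (n : ℕ) (cp : CPData n) (comps : List (Finset Cell))
    (T : Cell → Finset ℕ) : List (Finset Cell) :=
  comps.map (fun θ => (cp.out θ (restrict θ T)).sTil)

def compTilQs (n : ℕ) (cp : CPData n) (comps : List (Finset Cell))
    (T : Cell → Finset ℕ) : List (Cell → ℕ) :=
  comps.map (fun θ => (cp.out θ (restrict θ T)).Q)

def compTilTabs (n : ℕ) (cp : CPData n) (comps : List (Finset Cell))
    (T : Cell → Finset ℕ) : List (Cell → ℕ) :=
  comps.map (fun θ => (cp.out θ (restrict θ T)).Til)

/-- The composite shape `σ = σ_k * ⋯ * σ_1` of the insertion outputs. -/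
def insShape (n : ℕ) (cp : CPData n) (comps : List (Finset Cell))
    (T : Cell → Finset ℕ) : Finset Cell :=
  compositeShape (compTilShapes n cp comps T)

/-- The composite tableau `T̃ = T̃_k * ⋯ * T̃_1` of the insertion outputs. -/
def insTab (n : ℕ) (cp : CPData n) (comps : List (Finset Cell))
    (T : Cell → Finset ℕ) : Cell → ℕ :=
  compositeTab (compTilShapes n cp comps T) (compTilTabs n cp comps T)

/-- The restriction of a global flag to the row block of the `i`-th component. -/
def componentFlag (comps : List (Finset Cell)) (Φ : ℕ → ℕ) (i : ℕ) : ℕ → ℕ :=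
  fun r => Φ (rowOffset comps i + (r - minRowOf (comps.getD i ∅)))

/-- The composite induced flag `Φ̃ = Φ̃_1 * ⋯ * Φ̃_k`. -/
def insFlag (n : ℕ) (cp : CPData n) (comps : List (Finset Cell))
    (T : Cell → Finset ℕ) (Φ : ℕ → ℕ) : ℕ → ℕ :=
  compositeFlag (compTilShapes n cp comps T)
    ((List.range comps.length).map (fun i => fun p =>
      inducedFlag n cp (comps.getD i ∅) (restrict (comps.getD i ∅) T)
        (componentFlag comps Φ i) (minRowOf (comps.getD i ∅) + p)))

/-- The Burge correspondence applied to `⌊b(σ); r_{T̃}⌋`. -/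
def insBurge (n : ℕ) (B : BurgeData) (cp : CPData n) (comps : List (Finset Cell))
    (T : Cell → Finset ℕ) : BurgeOut :=
  B.out (bwordOn (insShape n cp comps T))
    (readingWordOn (insShape n cp comps T) (insTab n cp comps T))

/-- `p = (sh, rect(P̃), R)` arises from a highest weight element `P` of
`SVT(λ/μ, Φ)` of excess `e`; `R = p.Q` is then a `(λ/μ, Φ)`-compatible tableau
for SVT with `ex(R) = e`. -/
def IsCompatibleSVT (n : ℕ) (B : BurgeData) (cp : CPData n) (s : Finset Cell)
    (comps : List (Finset Cell)) (Φ : ℕ → ℕ) (e : ℕ → ℕ) (p : BurgeOut) : Prop :=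
  ∃ P : Cell → Finset ℕ, IsSVTOn n s P ∧ RespectsFlag Φ P ∧ HighestWeight n P ∧
    (∀ r, exRow s P r = e r) ∧ insBurge n B cp comps P = p

/-- Compatible of arbitrary excess. -/
def IsCompatibleSVT' (n : ℕ) (B : BurgeData) (cp : CPData n) (s : Finset Cell)
    (comps : List (Finset Cell)) (Φ : ℕ → ℕ) (p : BurgeOut) : Prop :=
  ∃ P : Cell → Finset ℕ, IsSVTOn n s P ∧ RespectsFlag Φ P ∧ HighestWeight n P ∧
    insBurge n B cp comps P = p

/-- The set `SVT_e(θ, Φ; θ̃, Q'')`. -/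
def PieceSet (n : ℕ) (cp : CPData n) (s : Finset Cell) (comps : List (Finset Cell))
    (Φ e : ℕ → ℕ) (tilShapes : List (Finset Cell)) (Qs : List (Cell → ℕ)) :
    Set (Cell → Finset ℕ) :=
  {T | IsSVTOn n s T ∧ RespectsFlag Φ T ∧ (∀ r, exRow s T r = e r) ∧
       compTilShapes n cp comps T = tilShapes ∧ compTilQs n cp comps T = Qs}

/-- The set `A(R, ν, Ψ)` of flagged tableaux of shape `ν` whose Burge pair is
`(rect(T), R)`. -/
def ASet (n : ℕ) (B : BurgeData) (sTil : Finset Cell) (Ψflag : ℕ → ℕ) (R : BurgeOut) :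
    Set (Cell → ℕ) :=
  {U | IsSSYTOn sTil U ∧ (∀ c ∈ sTil, U c ≤ n) ∧ RespectsFlagS sTil Ψflag U ∧
       (B.out (bwordOn sTil) (readingWordOn sTil U)).sh = R.sh ∧
       (B.out (bwordOn sTil) (readingWordOn sTil U)).Q = R.Q}

/-! ### Left keys and the Reiner–Shimozono flag compression (interfaces) -/

def colSetOf (sh : Finset Cell) (K : Cell → ℕ) (j : ℕ) : Set ℕ :=
  {v | ∃ i, (i, j) ∈ sh ∧ K (i, j) = v}

/-- A key tableau: the entries of each column contain those of the next column. -/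
def IsKeyTab (sh : Finset Cell) (K : Cell → ℕ) : Prop :=
  IsSSYTOn sh K ∧ ∀ j, colSetOf sh K (j + 1) ⊆ colSetOf sh K j

/-- Interface providing the left key `K₋(R)` of a semistandard Young tableau. -/
structure LeftKeyData where
  lk : Finset Cell → (Cell → ℕ) → (Cell → ℕ)
  key : ∀ sh R, IsPartitionShape sh → IsSSYTOn sh R → IsKeyTab sh (lk sh R)
  knuth : ∀ sh R, IsPartitionShape sh → IsSSYTOn sh R →
    ∀ v, wtS sh (lk sh R) v ≤ wtS sh R v + wtS sh R v + 1  -- (weakly specified)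

/-- `β(R)`: the weight of the left key of the recording tableau `R = p.Q`. -/
def betaOf (L : LeftKeyData) (p : BurgeOut) : ℕ → ℕ :=
  fun r => wtS p.sh (L.lk p.sh p.Q) (r + 1)

/-- concatenation of the factors `v^{(n)} ⋯ v^{(1)}` (factor `n-1` first, 0-indexed). -/
def wordOfFactors (n : ℕ) (v : ℕ → List ℕ) : List ℕ :=
  ((List.range n).reverse.map v).flatten

/-- The set `𝒲(α, Φ)` of Reiner–Shimozono: words `v = v^{(n)} ⋯ v^{(1)}` into maximal
row words of lengths `α_i`, letters of `v^{(i)}` at most `Φ_i`, whose Burge recording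
tableau for the biword `⌊b(α); v⌋` is `key(α)` (the unique SSYT of shape `α†` and
weight `α`). -/
def WSet (n : ℕ) (B : BurgeData) (α : ℕ → ℕ) (Φ : ℕ → ℕ) : Set (ℕ → List ℕ) :=
  {v | (∀ i, n ≤ i → v i = []) ∧
       (∀ i, (v i).length = α i) ∧
       (∀ i, (v i).Chain' (· ≤ ·)) ∧
       (∀ i, ∀ x ∈ v i, 1 ≤ x ∧ x ≤ Φ i) ∧
       (∀ i i', i' < i → v i ≠ [] → v i' ≠ [] →
          (∀ m, i' < m → m < i → v m = []) → (v i').headI < (v i).getLastD 0) ∧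
       (∀ r, rowLenOf (B.out (bwordComp n α) (wordOfFactors n v)).sh r = dsort n α r) ∧
       (∀ u, wtS (B.out (bwordComp n α) (wordOfFactors n v)).sh
               (B.out (bwordComp n α) (wordOfFactors n v)).Q u =
             if 1 ≤ u ∧ u ≤ n then α (u - 1) else 0)}

/-- Interface for the Reiner–Shimozono flag compression `β ↦ β̂` (relative to a flag):
`β̂† = β†` and there is a Knuth-equivalence-preserving bijection
`ζ : 𝒲(β, Φ) → 𝒲(β̂, Φ₀)`. -/
structure RSHatData (n : ℕ) (B : BurgeData) where
  hat : (ℕ → ℕ) → (ℕ → ℕ) → (ℕ → ℕ)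
  sorted : ∀ α Φ, IsFlag n Φ → ∀ i, dsort n (hat α Φ) i = dsort n α i
  zeta : ∀ α Φ, IsFlag n Φ → (WSet n B α Φ).Nonempty →
    ∃ ζ : (ℕ → List ℕ) → (ℕ → List ℕ),
      Set.BijOn ζ (WSet n B α Φ) (WSet n B (hat α Φ) (fun i => i + 1)) ∧
      ∀ v ∈ WSet n B α Φ, KnuthEquiv (wordOfFactors n v) (wordOfFactors n (ζ v))

/-! ### Compatible tableaux for RPP -/

/-- `(q, T')` witnesses that `q.Q` is a `(λ/μ, Φ)`-compatible tableau for RPP: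
`T'` is the unique flagged RPP of shape `s` with Yamanouchi row reading word whose
Burge recording tableau (for the biword `⌊h(T'); r_{T'}⌋`) is `q.Q`; and
`ceq(q.Q) := ceq(T')`. -/
def IsCompatibleRPP (n : ℕ) (B : BurgeData) (s : Finset Cell) (Φ : ℕ → ℕ)
    (q : BurgeOut) (T' : Cell → ℕ) : Prop :=
  (IsRPPOn s T' ∧ RespectsFlagS s Φ T' ∧ IsYamanouchi (rppRowWord s T') ∧
    B.out (rppHeights s T') (rppRowWord s T') = q) ∧
  (∀ T'' : Cell → ℕ,
    (IsRPPOn s T'' ∧ RespectsFlagS s Φ T'' ∧ IsYamanouchi (rppRowWord s T'') ∧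
      (B.out (rppHeights s T'') (rppRowWord s T'')).Q = q.Q) → T'' = T')

section Mine

attribute [-instance] Classical.propDecidable
attribute [local instance 10] Classical.propDecidable

set_option linter.all false


/-! ### Two-letter tables -/

lemma newman {α : Type*} (r : α → α → Prop) (μ : α → ℕ) (wf : ∀ a b, r a b → μ b < μ a)
    (lc : ∀ a b c, r a b → r a c →
      ∃ d, Relation.ReflTransGen r b d ∧ Relation.ReflTransGen r c d) :
    ∀ m a b c, μ a = m → Relation.ReflTransGen r a b → Relation.ReflTransGen r a c →
      ∃ d, Relation.ReflTransGen r b d ∧ Relation.ReflTransGen r c d := by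
  intro m
  induction m using Nat.strong_induction_on with
  | _ m ih =>
    intro a b c hm hab hac
    rcases Relation.ReflTransGen.cases_head hab with rfl | ⟨b1, hb1, hb⟩
    · exact ⟨c, hac, .refl⟩
    rcases Relation.ReflTransGen.cases_head hac with rfl | ⟨c1, hc1, hc⟩
    · exact ⟨b, .refl, hab⟩
    obtain ⟨d, hd1, hd2⟩ := lc a b1 c1 hb1 hc1
    obtain ⟨x, hx1, hx2⟩ := ih (μ b1) (hm ▸ wf _ _ hb1) b1 b d rfl hb hd1
    obtain ⟨y, hy1, hy2⟩ := ih (μ c1) (hm ▸ wf _ _ hc1) c1 x c rfl (hd2.trans hx2) hc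
    exact ⟨y, hx1.trans hy1, hy2⟩

lemma newman_eqv {α : Type*} (r : α → α → Prop) (μ : α → ℕ) (wf : ∀ a b, r a b → μ b < μ a)
    (lc : ∀ a b c, r a b → r a c →
      ∃ d, Relation.ReflTransGen r b d ∧ Relation.ReflTransGen r c d)
    (a b : α) (h : Relation.EqvGen r a b) :
    ∃ d, Relation.ReflTransGen r a d ∧ Relation.ReflTransGen r b d := by
  induction h with
  | rel x y h => exact ⟨y, .single h, .refl⟩
  | refl x => exact ⟨x, .refl, .refl⟩
  | symm x y _ ih => obtain ⟨d, h1, h2⟩ := ih; exact ⟨d, h2, h1⟩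
  | trans x y z _ _ ih1 ih2 =>
    obtain ⟨d, h1, h2⟩ := ih1
    obtain ⟨d', h1', h2'⟩ := ih2
    obtain ⟨u, hu1, hu2⟩ := newman r μ wf lc _ y d d' rfl h2 h1'
    exact ⟨u, h1.trans hu1, h2'.trans hu2⟩

def Mx (t e : ℕ → ℕ) (j x : ℕ) : Prop := t j < x ∧ x < e j

structure Val (N : ℕ) (t e h : ℕ → ℕ) : Prop where
  bnd : ∀ j, j < N → t j ≤ h j ∧ h j ≤ e j
  ben : ∀ j k, j < k → k < N → Mx t e j (h j) → Mx t e k (h k) → h k ≤ h j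

def updT (t e h : ℕ → ℕ) (j : ℕ) : ℕ → ℕ := fun k =>
  if k = j then (if h (j + 1) = e (j + 1) then e j else h (j + 1))
  else if k = j + 1 then (if h j = t j then t (j + 1) else h j) else h k

def StepT (N : ℕ) (t e : ℕ → ℕ) (h h' : ℕ → ℕ) : Prop :=
  Val N t e h ∧ ∃ j, j + 1 < N ∧ h j < h (j + 1) ∧ h' = updT t e h j

def flp (N : ℕ) (t e h : ℕ → ℕ) : ℕ → ℕ := fun k =>
  if k < N then (if h k = t k then e k else if h k = e k then t k else h k) else h k

def rankT (t e h : ℕ → ℕ) (j : ℕ) : ℕ := if h j = e j then 0 else if h j = t j then 2 else 1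

def potT (N : ℕ) (t e h : ℕ → ℕ) : ℕ := ∑ j ∈ Finset.range N, (N - j) * rankT t e h j

section
variable {N : ℕ} {t e : ℕ → ℕ} (ht : ∀ j, t (j + 1) ≤ t j) (he : ∀ j, e (j + 1) ≤ e j)

lemma flp_val {h : ℕ → ℕ} (hv : Val N t e h) : Val N t e (flp N t e h) := by
  have key : ∀ j, j < N → Mx t e j (flp N t e h j) → flp N t e h j = h j ∧ Mx t e j (h j) := by
    intro j hj
    have := hv.bnd j hj
    unfold flp Mx
    rw [if_pos hj]
    split_ifs <;> omega
  constructor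
  · intro j hj
    have := hv.bnd j hj
    unfold flp
    rw [if_pos hj]
    split_ifs <;> omega
  · intro j k hjk hk h1 h2
    obtain ⟨a1, a2⟩ := key j (by omega) h1
    obtain ⟨b1, b2⟩ := key k hk h2
    rw [a1, b1]
    exact hv.ben j k hjk hk a2 b2

lemma flp_flp {h : ℕ → ℕ} (hv : Val N t e h) : flp N t e (flp N t e h) = h := by
  funext k
  unfold flp
  by_cases hk : k < N
  · have := hv.bnd k hk
    simp only [if_pos hk]
    split_ifs <;> omega
  · simp [hk]

include ht he in
/-- the local case analysis of a step -/
lemma step_cases {h : ℕ → ℕ} (hv : Val N t e h) {j : ℕ} (hj : j + 1 < N) (hd : h j < h (j + 1)) :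
    (h j = t j ∧ h (j + 1) = e (j + 1)) ∨
    (h j = t j ∧ Mx t e (j + 1) (h (j + 1)) ∧ Mx t e j (h (j + 1))) ∨
    (h (j + 1) = e (j + 1) ∧ Mx t e j (h j) ∧ Mx t e (j + 1) (h j)) := by
  have h1 := hv.bnd j (by omega)
  have h2 := hv.bnd (j + 1) hj
  have h3 := hv.ben j (j + 1) (by omega) hj
  have := ht j
  have := he j
  unfold Mx at *
  omega

include ht he in
lemma upd_val {h : ℕ → ℕ} (hv : Val N t e h) {j : ℕ} (hj : j + 1 < N) (hd : h j < h (j + 1)) :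
    Val N t e (updT t e h j) := by
  have hc := step_cases ht he hv hj hd
  have h1 := hv.bnd j (by omega)
  have h2 := hv.bnd (j + 1) hj
  have a1 := ht j
  have a2 := he j
  constructor
  · intro k hk
    have := hv.bnd k hk
    unfold updT
    unfold Mx at hc
    split_ifs <;> subst_vars <;> omega
  · intro k l hkl hl
    have b0 := hv.ben k l hkl hl
    have b1 := hv.ben k j
    have b2 := hv.ben k (j + 1)
    have b3 := hv.ben j l
    have b4 := hv.ben (j + 1) l
    unfold updT
    unfold Mx at *
    split_ifs <;> subst_vars <;> omega

include ht he in
lemma step_val {h h' : ℕ → ℕ} (hs : StepT N t e h h') : Val N t e h' := by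
  obtain ⟨hv, j, hj, hd, rfl⟩ := hs
  exact upd_val ht he hv hj hd

lemma sum_two (f g : ℕ → ℕ) (j : ℕ) (hj : j + 1 < N) (hfg : ∀ k, k ≠ j → k ≠ j + 1 → f k = g k) :
    ∃ S, ∑ k ∈ Finset.range N, f k = S + f j + f (j + 1) ∧
      ∑ k ∈ Finset.range N, g k = S + g j + g (j + 1) := by
  refine ⟨∑ k ∈ ((Finset.range N).erase j).erase (j + 1), f k, ?_, ?_⟩
  · rw [← Finset.sum_erase_add _ _ (show j ∈ Finset.range N by simp; omega),
      ← Finset.sum_erase_add _ _ (show j + 1 ∈ (Finset.range N).erase j by simp; omega)]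
    omega
  · rw [← Finset.sum_erase_add _ _ (show j ∈ Finset.range N by simp; omega),
      ← Finset.sum_erase_add _ _ (show j + 1 ∈ (Finset.range N).erase j by simp; omega),
      Finset.sum_congr rfl (fun k hk => hfg k (by simp at hk; tauto) (by simp at hk; tauto))]
    show _ = ∑ k ∈ ((Finset.range N).erase j).erase (j + 1), g k + g j + g (j + 1)
    omega

include ht he in
lemma step_pot {h h' : ℕ → ℕ} (hs : StepT N t e h h') : potT N t e h' < potT N t e h := by
  obtain ⟨hv, j, hj, hd, rfl⟩ := hs
  have hc := step_cases ht he hv hj hd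
  have a1 := ht j
  have a2 := he j
  obtain ⟨S, h1, h2⟩ := sum_two (N := N) (fun j => (N - j) * rankT t e h j)
    (fun k => (N - k) * rankT t e (updT t e h j) k) j hj (by
      intro k h1 h2
      simp [rankT, updT, h1, h2])
  unfold potT
  rw [h1, h2]
  have e1 : N - j = (N - (j + 1)) + 1 := by omega
  simp only [e1]
  generalize N - (j + 1) = q
  have : rankT t e (updT t e h j) j < rankT t e h j ∧
      rankT t e (updT t e h j) j + rankT t e (updT t e h j) (j + 1)
        = rankT t e h j + rankT t e h (j + 1) := by
    have b1 := hv.bnd j (by omega)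
    have b2 := hv.bnd (j + 1) hj
    unfold Mx at hc
    unfold rankT updT
    simp only [if_true, Nat.succ_ne_self, if_false]
    split_ifs <;> omega
  obtain ⟨p1, p2⟩ := this
  have : q * rankT t e (updT t e h j) j + q * rankT t e (updT t e h j) (j + 1)
        = q * rankT t e h j + q * rankT t e h (j + 1) := by rw [← mul_add, p2, mul_add]
  linarith

include ht he in
lemma step_inv {h h' : ℕ → ℕ} (hs : StepT N t e h h') (φ : ℕ → ℕ → ℕ)
    (h21 : ∀ j, t j < e (j + 1) → φ j (t j) + φ (j + 1) (e (j + 1)) = φ j (e j) + φ (j + 1) (t (j + 1)))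
    (h2m : ∀ j b, Mx t e j b → Mx t e (j + 1) b →
       φ j (t j) + φ (j + 1) b = φ j b + φ (j + 1) (t (j + 1)))
    (hm1 : ∀ j b, Mx t e j b → Mx t e (j + 1) b →
       φ j b + φ (j + 1) (e (j + 1)) = φ j (e j) + φ (j + 1) b) :
    ∑ k ∈ Finset.range N, φ k (h' k) = ∑ k ∈ Finset.range N, φ k (h k) := by
  obtain ⟨hv, j, hj, hd, rfl⟩ := hs
  have hc := step_cases ht he hv hj hd
  obtain ⟨S, h1, h2⟩ := sum_two (N := N) (fun k => φ k (h k))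
    (fun k => φ k (updT t e h j k)) j hj (by
      intro k h1 h2
      simp [updT, h1, h2])
  rw [h1, h2]
  rcases hc with ⟨c1, c2⟩ | ⟨c1, c2, c3⟩ | ⟨c1, c2, c3⟩
  · have := h21 j (by omega)
    simp [updT, c1, c2]; omega
  · have := h2m j _ c3 c2
    have q : h (j + 1) ≠ e (j + 1) := c2.2.ne
    simp [updT, c1, q]; omega
  · have := hm1 j _ c2 c3
    have q : h j ≠ t j := c2.1.ne'
    simp [updT, c1, q]; omega

include ht he in
lemma step_flip {h h' : ℕ → ℕ} (hs : StepT N t e h h') :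
    StepT N t e (flp N t e h') (flp N t e h) := by
  have hv' := step_val ht he hs
  obtain ⟨hv, j, hj, hd, rfl⟩ := hs
  refine ⟨flp_val hv', j, hj, ?_, ?_⟩
  · have hc := step_cases ht he hv hj hd
    have h1 := hv.bnd j (by omega)
    have h2 := hv.bnd (j + 1) hj
    have a1 := ht j
    have a2 := he j
    unfold Mx at hc
    have hj' : j < N := by omega
    simp only [flp, updT, if_true, Nat.succ_ne_self, if_false, hj, hj']
    split_ifs <;> omega
  · funext k
    have hc := step_cases ht he hv hj hd
    have h1 := hv.bnd j (by omega)
    have h2 := hv.bnd (j + 1) hj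
    have a1 := ht j
    have a2 := he j
    unfold Mx at hc
    have hj' : j < N := by omega
    by_cases k1 : k = j
    · subst k1
      simp only [flp, updT, if_true, Nat.succ_ne_self, if_false, hj, hj']
      split_ifs <;> omega
    · by_cases k2 : k = j + 1
      · subst k2
        simp only [flp, updT, if_true, Nat.succ_ne_self, if_false, hj, hj']
        split_ifs <;> omega
      · simp [flp, updT, k1, k2]

include ht he in
lemma step_lc (a b c : ℕ → ℕ) (hab : StepT N t e a b) (hac : StepT N t e a c) :
    ∃ d, Relation.ReflTransGen (StepT N t e) b d ∧ Relation.ReflTransGen (StepT N t e) c d := by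
  have hbv := step_val ht he hab
  have hcv := step_val ht he hac
  obtain ⟨hv, j, hj, hd, rfl⟩ := hab
  obtain ⟨-, k, hk, hd', rfl⟩ := hac
  wlog hjk : j ≤ k generalizing j k
  · obtain ⟨d, h1, h2⟩ := this k hk hd' hcv j hj hd hbv (by omega)
    exact ⟨d, h2, h1⟩
  rcases Nat.lt_or_ge (j + 1) k with h2 | h2
  · refine ⟨updT t e (updT t e a j) k, .single ⟨hbv, k, hk, ?_, rfl⟩,
      .single ⟨hcv, j, hj, ?_, ?_⟩⟩
    · simp only [updT]
      rw [if_neg (by omega), if_neg (by omega), if_neg (by omega), if_neg (by omega)]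
      exact hd'
    · simp only [updT]
      rw [if_neg (by omega), if_neg (by omega), if_neg (by omega), if_neg (by omega)]
      exact hd
    · funext i
      have q1 : ¬ (k = j) := by omega
      have q2 : ¬ (k = j + 1) := by omega
      have q3 : ¬ (k + 1 = j) := by omega
      have q5 : ¬ (j = k) := by omega
      have q6 : ¬ (j + 1 = k) := by omega
      have q7 : ¬ (j = k + 1) := by omega
      simp only [updT, q1, q2, q3, q5, q6, q7, if_false, Nat.add_right_cancel_iff]
      by_cases i1 : i = j
      · subst i1; simp [q5, q7]
      by_cases i2 : i = j + 1
      · subst i2; simp [q5, q6]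
      simp [i1, i2]
  rcases Nat.lt_or_ge j k with h3 | h3
  · obtain rfl : k = j + 1 := by omega
    have hc1 := step_cases ht he hv hj hd
    have hc2 := step_cases ht he hv hk hd'
    have a1 := ht j
    have a2 := he j
    have a3 := ht (j + 1)
    have a4 := he (j + 1)
    have b1 := hv.bnd j (by omega)
    have b2 := hv.bnd (j + 1) (by omega)
    have b3 := hv.bnd (j + 1 + 1) (by omega)
    have n1 : j + 1 + 1 ≠ j := by omega
    have n2 : j ≠ j + 1 + 1 := by omega
    unfold Mx at hc1 hc2
    have c1 : a j = t j := by omega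
    have c2 : a (j + 1 + 1) = e (j + 1 + 1) := by omega
    have c3 : a (j + 1) ≠ e (j + 1) := by omega
    have c4 : a (j + 1) ≠ t (j + 1) := by omega
    have B : ∀ k, updT t e a j k = if k = j then a (j + 1) else if k = j + 1 then t (j + 1)
        else a k := by
      intro k; simp [updT, c1, c3]
    have C : ∀ k, updT t e a (j + 1) k = if k = j + 1 then e (j + 1)
        else if k = j + 1 + 1 then a (j + 1) else a k := by
      intro k; simp [updT, c2, c4]
    set b := updT t e a j with hb
    set c := updT t e a (j + 1) with hc
    have sb : b (j + 1) < b (j + 1 + 1) := by simp [B, n1, n2]; omega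
    have sc : c j < c (j + 1) := by simp [C, n1, n2]; omega
    have hbv2 := upd_val ht he hbv hk sb
    have hcv2 := upd_val ht he hcv hj sc
    have B2 : ∀ k, updT t e b (j + 1) k = if k = j then a (j + 1) else
        if k = j + 1 then e (j + 1) else if k = j + 1 + 1 then t (j + 1 + 1) else a k := by
      intro k
      by_cases k1 : k = j
      · subst k1; simp [updT, B, n1, n2, n1, n2]
      simp [updT, B, n1, n2, c2, k1]
      split_ifs <;> rfl
    have C2 : ∀ k, updT t e c j k = if k = j then e j else
        if k = j + 1 then t (j + 1) else if k = j + 1 + 1 then a (j + 1) else a k := by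
      intro k
      by_cases k1 : k = j
      · subst k1; simp [updT, C, n1, n2, n1, n2]
      by_cases k2 : k = j + 1
      · subst k2; simp [updT, C, n1, n2, c1]
      simp [updT, C, n1, n2, k1, k2]
    set b2 := updT t e b (j + 1) with hb2
    set c2' := updT t e c j with hc2'
    have sb2 : b2 j < b2 (j + 1) := by simp [B2, n1, n2]; omega
    have sc2 : c2' (j + 1) < c2' (j + 1 + 1) := by simp [C2, n1, n2]; omega
    refine ⟨updT t e b2 j, ((Relation.ReflTransGen.single ⟨hbv, j + 1, hk, sb, rfl⟩).tail
      ⟨hbv2, j, hj, sb2, rfl⟩), ((Relation.ReflTransGen.single ⟨hcv, j, hj, sc, rfl⟩).tail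
      ⟨hcv2, j + 1, hk, sc2, ?_⟩)⟩
    funext k
    have q : a (j + 1) ≠ t j := by omega
    have q2 : a (j + 1) ≠ e (j + 1 + 1) := by omega
    by_cases k1 : k = j
    · subst k1; simp [updT, B2, C2, n1, n2]
    by_cases k2 : k = j + 1
    · subst k2; simp [updT, B2, C2, n1, n2, q, q2]
    by_cases k3 : k = j + 1 + 1
    · subst k3; simp [updT, B2, C2, n1, n2]
    simp [updT, B2, C2, n1, n2, k1, k2, k3]
  · obtain rfl : k = j := by omega
    exact ⟨_, .refl, .refl⟩

def IsNF (N : ℕ) (t e h : ℕ → ℕ) : Prop :=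
  (∀ j, j < N → t j ≤ h j ∧ h j ≤ e j) ∧ ∀ j, j + 1 < N → h (j + 1) ≤ h j

lemma nf_val {h : ℕ → ℕ} (hn : IsNF N t e h) : Val N t e h := by
  refine ⟨hn.1, fun j k hjk hk _ _ => ?_⟩
  have key : ∀ d, j + d < N → h (j + d) ≤ h j := by
    intro d
    induction d with
    | zero => intro _; exact le_rfl
    | succ d ih => exact fun hd => le_trans (hn.2 (j + d) hd) (ih (by omega))
  have := key (k - j) (by omega)
  rwa [show j + (k - j) = k by omega] at this

lemma nf_nostep {h h' : ℕ → ℕ} (hn : IsNF N t e h) : ¬ StepT N t e h h' := by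
  rintro ⟨_, j, hj, hd, _⟩
  have := hn.2 j hj
  omega

lemma nf_rtg {h h' : ℕ → ℕ} (hn : IsNF N t e h)
    (hs : Relation.ReflTransGen (StepT N t e) h h') : h = h' := by
  rcases Relation.ReflTransGen.cases_head hs with rfl | ⟨b, hb, _⟩
  · rfl
  · exact absurd hb (nf_nostep hn)

include ht he in
lemma nf_exists (h : ℕ → ℕ) (hv : Val N t e h) :
    ∃ u, IsNF N t e u ∧ Relation.ReflTransGen (StepT N t e) h u := by
  induction hm : potT N t e h using Nat.strong_induction_on generalizing h with
  | _ m ih =>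
    by_cases hn : IsNF N t e h
    · exact ⟨h, hn, .refl⟩
    have : ∃ j, j + 1 < N ∧ h j < h (j + 1) := by
      by_contra hc
      push Not at hc
      exact hn ⟨hv.bnd, hc⟩
    obtain ⟨j, hj, hd⟩ := this
    have hs : StepT N t e h (updT t e h j) := ⟨hv, j, hj, hd, rfl⟩
    obtain ⟨u, hu, hr⟩ := ih _ (hm ▸ step_pot ht he hs) _ (step_val ht he hs) rfl
    exact ⟨u, hu, hr.head hs⟩

include ht he in
lemma nf_unique {u w : ℕ → ℕ} (hu : IsNF N t e u) (hw : IsNF N t e w)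
    (h : Relation.EqvGen (StepT N t e) u w) : u = w := by
  obtain ⟨d, h1, h2⟩ := newman_eqv _ (potT N t e) (fun _ _ h => step_pot ht he h)
    (step_lc ht he) _ _ h
  rw [nf_rtg hu h1, nf_rtg hw h2]

include ht he in
lemma eqv_flip {u w : ℕ → ℕ} (h : Relation.EqvGen (StepT N t e) u w) :
    Relation.EqvGen (StepT N t e) (flp N t e u) (flp N t e w) := by
  induction h with
  | rel x y h => exact .symm _ _ (.rel _ _ (step_flip ht he h))
  | refl x => exact .refl _
  | symm x y _ ih => exact .symm _ _ ih
  | trans x y z _ _ ih1 ih2 => exact .trans _ _ _ ih1 ih2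

lemma rtg_eqv {u w : ℕ → ℕ} (h : Relation.ReflTransGen (StepT N t e) u w) :
    Relation.EqvGen (StepT N t e) u w := by
  induction h with
  | refl => exact .refl _
  | tail _ h ih => exact .trans _ _ _ ih (.rel _ _ h)

def iotaT (N : ℕ) (t e h : ℕ → ℕ) : ℕ → ℕ :=
  if hx : ∃ u, IsNF N t e u ∧ Relation.ReflTransGen (StepT N t e) (flp N t e h) u then hx.choose
  else h

include ht he in
lemma iota_spec {h : ℕ → ℕ} (hn : IsNF N t e h) :
    IsNF N t e (iotaT N t e h) ∧
      Relation.ReflTransGen (StepT N t e) (flp N t e h) (iotaT N t e h) := by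
  have hx := nf_exists ht he _ (flp_val (nf_val hn))
  unfold iotaT
  rw [dif_pos hx]
  exact hx.choose_spec

include ht he in
lemma iota_iota {h : ℕ → ℕ} (hn : IsNF N t e h) :
    iotaT N t e (iotaT N t e h) = h := by
  obtain ⟨h1, h2⟩ := iota_spec ht he hn
  obtain ⟨h3, h4⟩ := iota_spec ht he h1
  refine nf_unique ht he h3 hn ?_
  refine .trans _ _ _ (.symm _ _ (rtg_eqv h4)) ?_
  have := eqv_flip ht he (rtg_eqv h2)
  rw [flp_flp (nf_val hn)] at this
  exact .symm _ _ this

include ht he in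
lemma rtg_inv {h h' : ℕ → ℕ} (hs : Relation.ReflTransGen (StepT N t e) h h') (φ : ℕ → ℕ → ℕ)
    (h21 : ∀ j, t j < e (j + 1) → φ j (t j) + φ (j + 1) (e (j + 1)) = φ j (e j) + φ (j + 1) (t (j + 1)))
    (h2m : ∀ j b, Mx t e j b → Mx t e (j + 1) b →
       φ j (t j) + φ (j + 1) b = φ j b + φ (j + 1) (t (j + 1)))
    (hm1 : ∀ j b, Mx t e j b → Mx t e (j + 1) b →
       φ j b + φ (j + 1) (e (j + 1)) = φ j (e j) + φ (j + 1) b) :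
    ∑ k ∈ Finset.range N, φ k (h' k) = ∑ k ∈ Finset.range N, φ k (h k) := by
  induction hs with
  | refl => rfl
  | tail _ h ih => rw [step_inv ht he h φ h21 h2m hm1, ih]

include ht he in
lemma iota_cnt1 {h : ℕ → ℕ} (hn : IsNF N t e h) :
    ((Finset.range N).filter (fun j => t j < iotaT N t e h j)).card =
    ((Finset.range N).filter (fun j => h j < e j)).card := by
  obtain ⟨h1, h2⟩ := iota_spec ht he hn
  simp only [Finset.card_filter]
  have := rtg_inv ht he h2 (fun j x => if t j < x then 1 else 0) ?_ ?_ ?_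
  · rw [this]
    refine Finset.sum_congr rfl fun j hj => ?_
    have hj' := Finset.mem_range.1 hj
    have := hn.1 j hj'
    unfold flp
    rw [if_pos hj']
    split_ifs <;> omega
  all_goals
    intro j
    have a1 := ht j
    have a2 := he j
    try unfold Mx
    try intro b
    intros
    split_ifs <;> omega

include ht he in
lemma iota_cnt2 {h : ℕ → ℕ} (hn : IsNF N t e h) :
    ((Finset.range N).filter (fun j => iotaT N t e h j < e j)).card =
    ((Finset.range N).filter (fun j => t j < h j)).card := by
  obtain ⟨h1, h2⟩ := iota_spec ht he hn
  have := iota_cnt1 ht he h1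
  rw [iota_iota ht he hn] at this
  exact this.symm

include ht he in
lemma iota_mix {h : ℕ → ℕ} (hn : IsNF N t e h) (r : ℕ) :
    ((Finset.range N).filter (fun j => Mx t e j (iotaT N t e h j) ∧ iotaT N t e h j = r)).card =
    ((Finset.range N).filter (fun j => Mx t e j (h j) ∧ h j = r)).card := by
  obtain ⟨h1, h2⟩ := iota_spec ht he hn
  simp only [Finset.card_filter]
  have := rtg_inv ht he h2 (fun j x => if Mx t e j x ∧ x = r then 1 else 0) ?_ ?_ ?_
  · rw [this]
    refine Finset.sum_congr rfl fun j hj => ?_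
    have hj' := Finset.mem_range.1 hj
    have := hn.1 j hj'
    unfold flp Mx
    rw [if_pos hj']
    split_ifs <;> omega
  all_goals
    intro j
    have a1 := ht j
    have a2 := he j
    try unfold Mx
    try intro b
    intros
    split_ifs <;> omega

end


/-! ### Reverse plane partitions via column heights -/

lemma iota_ge {N : ℕ} {t e : ℕ → ℕ} (ht : ∀ j, t (j + 1) ≤ t j) (he : ∀ j, e (j + 1) ≤ e j)
    {h : ℕ → ℕ} (hn : IsNF N t e h) (j : ℕ) (hj : N ≤ j) : iotaT N t e h j = h j := by
  have h2 := (iota_spec ht he hn).2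
  have : flp N t e h j = h j := by unfold flp; rw [if_neg (by omega)]
  rw [← this]
  generalize iotaT N t e h = u at h2
  induction h2 with
  | refl => rfl
  | tail _ hs ih =>
    obtain ⟨_, k, hk, _, rfl⟩ := hs
    rw [← ih]
    unfold updT
    rw [if_neg (by omega), if_neg (by omega)]

lemma cnt_lower (p : ℕ → Prop) [DecidablePred p] (N : ℕ) (hb : ∀ r, p r → r < N) (hd : ∀ r, p (r + 1) → p r)
    (r : ℕ) : r < ((Finset.range N).filter p).card ↔ p r := by
  have hex : ∃ k, ¬ p k := ⟨N, fun h => lt_irrefl _ (hb _ h)⟩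
  have hk : ∀ r, p r ↔ r < Nat.find hex := by
    intro r
    constructor
    · intro hr
      by_contra hc
      have : ∀ d, p (Nat.find hex + d) → p (Nat.find hex) := by
        intro d
        induction d with
        | zero => exact id
        | succ d ih => exact fun h => ih (hd _ h)
      exact Nat.find_spec hex (this (r - Nat.find hex) (by rwa [show Nat.find hex + (r - Nat.find hex) = r by omega]))
    · intro hr
      by_contra hc
      exact Nat.find_min hex hr hc
  generalize Nat.find hex = k at hk
  have : (Finset.range N).filter p = Finset.range k := by
    ext r
    simp only [Finset.mem_filter, Finset.mem_range]
    have := hb r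
    rw [hk] at *
    exact ⟨fun h => h.2, fun h => ⟨this h, h⟩⟩
  rw [this, Finset.card_range, hk]

structure Skew (lam mu : Finset Cell) : Prop where
  hl : IsPartitionShape lam
  hm : IsPartitionShape mu
  hs : mu ⊆ lam

def Hh (lam : Finset Cell) (R : Cell → ℕ) (v j : ℕ) : ℕ :=
  ((Finset.range (lam.sup Prod.fst + 1)).filter (fun r => (r, j) ∈ lam ∧ R (r, j) ≤ v)).card

section
variable {lam mu : Finset Cell} (S : Skew lam mu)

include S in
lemma mem_s_of {r j r' j' a b : ℕ} (h1 : (r, j) ∈ lam \ mu) (h2 : (r', j') ∈ lam \ mu)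
    (ha : r ≤ a) (hb : a ≤ r') (hc : j ≤ b) (hd : b ≤ j') : (a, b) ∈ lam \ mu := by
  simp only [Finset.mem_sdiff] at *
  exact ⟨S.hl _ _ _ _ h2.1 hb hd, fun h => h1.2 (S.hm _ _ _ _ h ha hc)⟩

include S in
lemma R_zero {R : Cell → ℕ} (hR : IsRPPOn (lam \ mu) R) {c : Cell} (hc : c ∈ lam) :
    R c = 0 ↔ c ∈ mu := by
  constructor
  · intro h
    by_contra hm
    have := hR.1 c (by simp [hc, hm])
    omega
  · intro h
    exact hR.2.1 c (by simp [h])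

include S in
lemma R_mono {R : Cell → ℕ} (hR : IsRPPOn (lam \ mu) R) {r j r' j' : ℕ}
    (h2 : (r', j') ∈ lam) (ha : r ≤ r') (hb : j ≤ j') : R (r, j) ≤ R (r', j') := by
  have h1 : (r, j) ∈ lam := S.hl _ _ _ _ h2 ha hb
  by_cases hm : (r, j) ∈ mu
  · rw [(R_zero S hR h1).2 hm]; omega
  have s1 : (r, j) ∈ lam \ mu := by simp [h1, hm]
  have s2 : (r', j') ∈ lam \ mu := by
    simp only [Finset.mem_sdiff]
    exact ⟨h2, fun h => hm (S.hm _ _ _ _ h ha hb)⟩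
  obtain ⟨d, rfl⟩ := Nat.exists_eq_add_of_le ha
  obtain ⟨e, rfl⟩ := Nat.exists_eq_add_of_le hb
  have A : ∀ x, x ≤ d → R (r, j) ≤ R (r + x, j) := by
    intro x
    induction x with
    | zero => intro _; exact le_rfl
    | succ x ih =>
      intro hx
      exact (ih (by omega)).trans (hR.2.2.2 (r + x) j
        (mem_s_of S s1 s2 (by omega) (by omega) (by omega) (by omega))
        (mem_s_of S s1 s2 (by omega) (by omega) (by omega) (by omega)))
  have B : ∀ x, x ≤ e → R (r + d, j) ≤ R (r + d, j + x) := by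
    intro x
    induction x with
    | zero => intro _; exact le_rfl
    | succ x ih =>
      intro hx
      exact (ih (by omega)).trans (hR.2.2.1 (r + d) (j + x)
        (mem_s_of S s1 s2 (by omega) (by omega) (by omega) (by omega))
        (mem_s_of S s1 s2 (by omega) (by omega) (by omega) (by omega)))
  exact (A d le_rfl).trans (B e le_rfl)

include S in
lemma Hh_iff {R : Cell → ℕ} (hR : IsRPPOn (lam \ mu) R) (v j r : ℕ) :
    r < Hh lam R v j ↔ (r, j) ∈ lam ∧ R (r, j) ≤ v := by
  unfold Hh
  rw [cnt_lower]
  · rintro r ⟨h, _⟩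
    exact Nat.lt_succ_of_le (Finset.le_sup (f := Prod.fst) h)
  · rintro r ⟨h, h'⟩
    exact ⟨S.hl _ _ _ _ h (by omega) le_rfl, (R_mono S hR h (by omega) le_rfl).trans h'⟩

include S in
lemma Hh_anti {R : Cell → ℕ} (hR : IsRPPOn (lam \ mu) R) (v j : ℕ) :
    Hh lam R v (j + 1) ≤ Hh lam R v j := by
  by_contra hc
  push Not at hc
  rw [Hh_iff S hR] at hc
  have : Hh lam R v j < Hh lam R v j := by
    rw [Hh_iff S hR]
    exact ⟨S.hl _ _ _ _ hc.1 le_rfl (by omega), (R_mono S hR hc.1 le_rfl (by omega)).trans hc.2⟩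
  omega

include S in
lemma Hh_mono {R : Cell → ℕ} (hR : IsRPPOn (lam \ mu) R) {v w : ℕ} (hvw : v ≤ w) (j : ℕ) :
    Hh lam R v j ≤ Hh lam R w j := by
  by_contra hc
  push Not at hc
  rw [Hh_iff S hR] at hc
  have : Hh lam R w j < Hh lam R w j := by
    rw [Hh_iff S hR]
    exact ⟨hc.1, hc.2.trans hvw⟩
  omega

include S in
lemma R_ext {R R' : Cell → ℕ} (hR : IsRPPOn (lam \ mu) R) (hR' : IsRPPOn (lam \ mu) R')
    (h : ∀ v, Hh lam R v = Hh lam R' v) : R = R' := by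
  funext ⟨r, j⟩
  by_cases hc : (r, j) ∈ lam
  · have : ∀ v, R (r, j) ≤ v ↔ R' (r, j) ≤ v := by
      intro v
      have h1 := Hh_iff S hR v j r
      have h2 := Hh_iff S hR' v j r
      rw [h v] at h1
      tauto
    exact le_antisymm ((this _).2 le_rfl) ((this _).1 le_rfl)
  · rw [hR.2.1 _ (by simp [hc]), hR'.2.1 _ (by simp [hc])]

/-- column `j` contains `v` -/
def colC (s : Finset Cell) (R : Cell → ℕ) (v j : ℕ) : Prop := ∃ i, (i, j) ∈ s ∧ R (i, j) = v

include S in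
lemma colC_iff {R : Cell → ℕ} (hR : IsRPPOn (lam \ mu) R) (v j : ℕ) :
    colC (lam \ mu) R (v + 1) j ↔ Hh lam R v j < Hh lam R (v + 1) j := by
  constructor
  · rintro ⟨r, h, h'⟩
    have h1 := Hh_iff S hR v j r
    have h2 := Hh_iff S hR (v + 1) j r
    have : (r, j) ∈ lam := (Finset.mem_sdiff.1 h).1
    have h3 : ¬ r < Hh lam R v j := by rw [h1, h']; omega
    have h4 : r < Hh lam R (v + 1) j := by rw [h2, h']; exact ⟨this, le_rfl⟩
    omega
  · intro h
    rw [Hh_iff S hR] at h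
    have h3 : ¬ Hh lam R v j < Hh lam R v j := lt_irrefl _
    rw [Hh_iff S hR] at h3
    have : R (Hh lam R v j, j) = v + 1 := by
      by_contra hc
      exact h3 ⟨h.1, by omega⟩
    refine ⟨_, ?_, this⟩
    by_contra hc
    rw [hR.2.1 _ hc] at this
    omega

def buildR (N i : ℕ) (R : Cell → ℕ) (h : ℕ → ℕ) : Cell → ℕ := fun c =>
  if c.2 < N ∧ (R c = i ∨ R c = i + 1) then (if c.1 < h c.2 then i else i + 1) else R c

def betaR (lam : Finset Cell) (N i : ℕ) (R : Cell → ℕ) : Cell → ℕ :=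
  buildR N i R (iotaT N (Hh lam R (i - 1)) (Hh lam R (i + 1)) (Hh lam R i))

include S in
lemma H_NF {R : Cell → ℕ} (hR : IsRPPOn (lam \ mu) R) (N i : ℕ) :
    IsNF N (Hh lam R (i - 1)) (Hh lam R (i + 1)) (Hh lam R i) :=
  ⟨fun j _ => ⟨Hh_mono S hR (by omega) j, Hh_mono S hR (by omega) j⟩,
    fun j _ => Hh_anti S hR i j⟩

include S in
lemma build_rpp {R : Cell → ℕ} (hR : IsRPPOn (lam \ mu) R) {N i : ℕ} (hi : 1 ≤ i)
    (hN : ∀ r, (r, N) ∈ lam \ mu → R (r, N) ≠ i) {h : ℕ → ℕ}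
    (hn : IsNF N (Hh lam R (i - 1)) (Hh lam R (i + 1)) h) :
    IsRPPOn (lam \ mu) (buildR N i R h) := by
  refine ⟨?_, ?_, ?_, ?_⟩
  · intro c hc
    have := hR.1 c hc
    unfold buildR
    split_ifs <;> omega
  · intro c hc
    have := hR.2.1 c hc
    unfold buildR
    rw [if_neg (by omega)]
    exact this
  · intro r j h1 h2
    have a := hR.2.2.1 r j h1 h2
    have b := hn.2 j
    have c := hN r
    by_cases hj : j + 1 = N
    · subst hj
      have c' := c h2
      simp only [buildR]
      split_ifs <;> omega
    · simp only [buildR]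
      split_ifs <;> omega
  · intro r j h1 h2
    have a := hR.2.2.2 r j h1 h2
    simp only [buildR]
    split_ifs <;> omega

include S in
lemma build_le {R : Cell → ℕ} (hR : IsRPPOn (lam \ mu) R) {N i : ℕ} (hi : 1 ≤ i) {h : ℕ → ℕ}
    (hn : IsNF N (Hh lam R (i - 1)) (Hh lam R (i + 1)) h) {r j : ℕ} (hj : j < N)
    (hc : (r, j) ∈ lam) :
    buildR N i R h (r, j) ≤ i ↔ r < h j := by
  have h1 := Hh_iff S hR (i - 1) j r
  have h2 := Hh_iff S hR (i + 1) j r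
  have h3 := hn.1 j hj
  simp only [hc, true_and] at h1 h2
  simp only [buildR]
  split_ifs <;> omega

include S in
lemma build_H {R : Cell → ℕ} (hR : IsRPPOn (lam \ mu) R) {N i : ℕ} (hi : 1 ≤ i)
    (hN : ∀ r, (r, N) ∈ lam \ mu → R (r, N) ≠ i) {h : ℕ → ℕ}
    (hn : IsNF N (Hh lam R (i - 1)) (Hh lam R (i + 1)) h)
    (hge : ∀ j, N ≤ j → h j = Hh lam R i j) (v : ℕ) :
    Hh lam (buildR N i R h) v = if v = i then h else Hh lam R v := by
  have hR' := build_rpp S hR hi hN hn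
  funext j
  refine eq_of_forall_lt_iff fun r => ?_
  rw [Hh_iff S hR']
  by_cases hv : v = i
  · subst hv
    rw [if_pos rfl]
    by_cases hj : j < N
    · constructor
      · rintro ⟨a, b⟩
        exact (build_le S hR hi hn hj a).1 b
      · intro hr
        have : (r, j) ∈ lam := by
          have := (hn.1 j hj).2
          exact ((Hh_iff S hR (v + 1) j r).1 (by omega)).1
        exact ⟨this, (build_le S hR hi hn hj this).2 hr⟩
    · rw [hge j (by omega), Hh_iff S hR]
      simp only [buildR, hj, false_and, if_false]
  · rw [if_neg hv, Hh_iff S hR]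
    have : buildR N i R h (r, j) ≤ v ↔ R (r, j) ≤ v := by
      simp only [buildR]
      split_ifs <;> omega
    rw [this]

include S in
lemma beta_facts {R : Cell → ℕ} (hR : IsRPPOn (lam \ mu) R) {N i : ℕ} (hi : 1 ≤ i)
    (hN : ∀ r, (r, N) ∈ lam \ mu → R (r, N) ≠ i) :
    IsRPPOn (lam \ mu) (betaR lam N i R) ∧
    (∀ v, v ≠ i → Hh lam (betaR lam N i R) v = Hh lam R v) ∧
    Hh lam (betaR lam N i R) i = iotaT N (Hh lam R (i - 1)) (Hh lam R (i + 1)) (Hh lam R i) ∧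
    betaR lam N i (betaR lam N i R) = R ∧
    (∀ c : Cell, N ≤ c.2 → betaR lam N i R c = R c) ∧
    (∀ c, R c ≠ i → R c ≠ i + 1 → betaR lam N i R c = R c) ∧
    (∀ c, R c = i ∨ R c = i + 1 → betaR lam N i R c = i ∨ betaR lam N i R c = i + 1) := by
  have ht := Hh_anti S hR (i - 1)
  have he := Hh_anti S hR (i + 1)
  have hnf := H_NF S hR N i
  have hn := (iota_spec ht he hnf).1
  have hge := iota_ge ht he hnf
  have h1 : IsRPPOn (lam \ mu) (betaR lam N i R) := build_rpp S hR hi hN hn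
  have h2 := build_H S hR hi hN hn hge
  have h2a : ∀ v, v ≠ i → Hh lam (betaR lam N i R) v = Hh lam R v := by
    intro v hv
    have := h2 v
    rwa [if_neg hv] at this
  have h2b : Hh lam (betaR lam N i R) i
      = iotaT N (Hh lam R (i - 1)) (Hh lam R (i + 1)) (Hh lam R i) := by
    have := h2 i
    rwa [if_pos rfl] at this
  have h5 : ∀ c : Cell, N ≤ c.2 → betaR lam N i R c = R c := by
    intro c hc
    unfold betaR buildR
    rw [if_neg (by omega)]
  refine ⟨h1, h2a, h2b, ?_, h5, ?_, ?_⟩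
  · have hN' : ∀ r, (r, N) ∈ lam \ mu → betaR lam N i R (r, N) ≠ i := by
      intro r hr
      rw [h5 _ (le_refl N)]
      exact hN r hr
    have hnf' := H_NF S h1 N i
    have hn' := (iota_spec (Hh_anti S h1 (i - 1)) (Hh_anti S h1 (i + 1)) hnf').1
    have hge' := iota_ge (Hh_anti S h1 (i - 1)) (Hh_anti S h1 (i + 1)) hnf'
    refine R_ext S (build_rpp S h1 hi hN' hn') hR fun v => ?_
    have hB := build_H S h1 hi hN' hn' hge' v
    change Hh lam (betaR lam N i (betaR lam N i R)) v = _ at hB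
    refine hB.trans ?_
    split_ifs with hv
    · have e1 : Hh lam (betaR lam N i R) (i - 1) = Hh lam R (i - 1) := h2a _ (by omega)
      have e2 : Hh lam (betaR lam N i R) (i + 1) = Hh lam R (i + 1) := h2a _ (by omega)
      have := iota_iota ht he hnf
      rw [← h2b] at this
      subst hv
      change iotaT N (Hh lam (betaR lam N v R) (v - 1)) (Hh lam (betaR lam N v R) (v + 1)) (Hh lam (betaR lam N v R) v) = _
      rw [e1, e2, this]
    · exact h2a v hv
  · intro c a b
    unfold betaR buildR
    rw [if_neg (by tauto)]
  · intro c a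
    unfold betaR buildR
    split_ifs
    · left; rfl
    · right; rfl
    · exact a

/-- number of columns `k < N` containing `v` -/
def cntC (s : Finset Cell) (R : Cell → ℕ) (v : ℕ) (A : Finset ℕ) : ℕ := (A.filter (colC s R v)).card

include S in
lemma beta_cnt {R : Cell → ℕ} (hR : IsRPPOn (lam \ mu) R) {N i : ℕ} (hi : 1 ≤ i)
    (hN : ∀ r, (r, N) ∈ lam \ mu → R (r, N) ≠ i) :
    cntC (lam \ mu) (betaR lam N i R) i (Finset.range N) = cntC (lam \ mu) R (i + 1) (Finset.range N) ∧
    cntC (lam \ mu) (betaR lam N i R) (i + 1) (Finset.range N) = cntC (lam \ mu) R i (Finset.range N) ∧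
    ∀ v j, v ≠ i → v ≠ i + 1 → (colC (lam \ mu) (betaR lam N i R) v j ↔ colC (lam \ mu) R v j) := by
  obtain ⟨h1, h2, h3, -, -, h6, h7⟩ := beta_facts S hR hi hN
  have ht := Hh_anti S hR (i - 1)
  have he := Hh_anti S hR (i + 1)
  have hnf := H_NF S hR N i
  have c1 := iota_cnt1 ht he hnf
  have c2 := iota_cnt2 ht he hnf
  have q1 : ∀ {R : Cell → ℕ} (hR : IsRPPOn (lam \ mu) R), cntC (lam \ mu) R i (Finset.range N)
      = ((Finset.range N).filter (fun j => Hh lam R (i - 1) j < Hh lam R i j)).card := by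
    intro R hR
    unfold cntC
    congr 1
    refine Finset.filter_congr fun j _ => ?_
    have := colC_iff S hR (i - 1) j
    rwa [show i - 1 + 1 = i by omega] at this
  have q2 : ∀ {R : Cell → ℕ} (hR : IsRPPOn (lam \ mu) R), cntC (lam \ mu) R (i + 1) (Finset.range N)
      = ((Finset.range N).filter (fun j => Hh lam R i j < Hh lam R (i + 1) j)).card := by
    intro R hR
    unfold cntC
    congr 1
    exact Finset.filter_congr fun j _ => colC_iff S hR i j
  refine ⟨?_, ?_, ?_⟩
  · rw [q1 h1, q2 hR, h3, h2 _ (by omega)]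
    exact c1
  · rw [q1 hR, q2 h1, h3, h2 _ (by omega)]
    exact c2
  · intro v j hv hv'
    unfold colC
    have : ∀ c, betaR lam N i R c = v ↔ R c = v := by
      intro c
      have a := h6 c
      have b := h7 c
      omega
    simp only [this]

lemma ceq_eq (s : Finset Cell) (R : Cell → ℕ) (r : ℕ) : ceqOn s R r =
    ((Finset.range (s.sup Prod.snd + 1)).filter
      (fun j => (r, j) ∈ s ∧ (r + 1, j) ∈ s ∧ R (r, j) = R (r + 1, j))).card := by
  unfold ceqOn
  refine Finset.card_bij' (fun c _ => c.2) (fun j _ => (r, j)) ?_ ?_ ?_ ?_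
  · rintro ⟨a, b⟩ h
    simp only [Finset.mem_filter, Finset.mem_range] at h ⊢
    obtain ⟨h1, rfl, h2, h3⟩ := h
    exact ⟨Nat.lt_succ_of_le (Finset.le_sup (f := Prod.snd) h1), h1, h2, h3⟩
  · intro j h
    simp only [Finset.mem_filter, Finset.mem_range] at h ⊢
    tauto
  · rintro ⟨a, b⟩ h
    simp only [Finset.mem_filter, Finset.mem_range] at h ⊢
    obtain ⟨h1, rfl, h2, h3⟩ := h
    rfl
  · intro j h
    rfl

include S in
lemma ceq_mix {R : Cell → ℕ} (hR : IsRPPOn (lam \ mu) R) {N i : ℕ} (hi : 1 ≤ i)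
    (hN : N ≤ (lam \ mu).sup Prod.snd + 1) (r : ℕ) :
    ceqOn (lam \ mu) R r + ((Finset.range N).filter (fun j =>
      Mx (Hh lam R (i - 1)) (Hh lam R (i + 1)) j (Hh lam R i j) ∧ Hh lam R i j = r + 1)).card =
    ((Finset.range ((lam \ mu).sup Prod.snd + 1)).filter
      (fun j => (r, j) ∈ (lam \ mu) ∧ (r + 1, j) ∈ (lam \ mu) ∧ (R (r, j) = R (r + 1, j) ∨
        j < N ∧ (R (r, j) = i ∨ R (r, j) = i + 1) ∧ (R (r + 1, j) = i ∨ R (r + 1, j) = i + 1)))).card := by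
  rw [ceq_eq, ← Finset.card_union_of_disjoint]
  · congr 1
    ext j
    simp only [Finset.mem_union, Finset.mem_filter, Finset.mem_range]
    have a1 := Hh_iff S hR (i - 1) j r
    have a2 := Hh_iff S hR i j r
    have a3 := Hh_iff S hR i j (r + 1)
    have a4 := Hh_iff S hR (i + 1) j (r + 1)
    have a5 := hR.2.2.2 r j
    have a6 := hR.2.1 (r, j)
    have a7 := hR.2.1 (r + 1, j)
    have a8 : (r + 1, j) ∈ lam → (r, j) ∈ lam := fun h => S.hl _ _ _ _ h (by omega) le_rfl
    have a9 : (r, j) ∈ lam \ mu → (r, j) ∈ lam := fun h => (Finset.mem_sdiff.1 h).1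
    have a10 : (r + 1, j) ∈ lam \ mu → (r + 1, j) ∈ lam := fun h => (Finset.mem_sdiff.1 h).1
    unfold Mx
    constructor
    · rintro (⟨h1, h2, h3, h4⟩ | ⟨h1, ⟨h2, h3⟩, h4⟩)
      · exact ⟨h1, h2, h3, Or.inl h4⟩
      · have b1 := a4.1 (by omega)
        have b2 := a2.1 (by omega)
        have b3 : ¬ R (r, j) ≤ i - 1 := fun h => by have := a1.2 ⟨b2.1, h⟩; omega
        have b4 : ¬ R (r + 1, j) ≤ i := fun h => by have := a3.2 ⟨b1.1, h⟩; omega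
        have c1 : (r, j) ∈ lam \ mu := by by_contra h; have := a6 h; omega
        have c2 : (r + 1, j) ∈ lam \ mu := by by_contra h; have := a7 h; omega
        exact ⟨by omega, c1, c2, Or.inr ⟨h1, by omega, by omega⟩⟩
    · rintro ⟨h1, h2, h3, h4⟩
      have h5 := a5 h2 h3
      simp only [a9 h2, true_and] at a1 a2
      simp only [a10 h3, true_and] at a3 a4
      by_cases h6 : R (r, j) = R (r + 1, j)
      · exact Or.inl ⟨h1, h2, h3, h6⟩
      · right
        refine ⟨?_, ⟨?_, ?_⟩, ?_⟩ <;> omega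
  · rw [Finset.disjoint_left]
    intro j
    simp only [Finset.mem_filter, Finset.mem_range]
    rintro ⟨h1, h2, h3, h4⟩ ⟨-, -, h5⟩
    have a2 := Hh_iff S hR i j r
    have a3 := Hh_iff S hR i j (r + 1)
    have b2 := a2.1 (by omega)
    have := a3.2 ⟨(Finset.mem_sdiff.1 h3).1, by omega⟩
    omega

include S in
lemma beta_ceq {R : Cell → ℕ} (hR : IsRPPOn (lam \ mu) R) {N i : ℕ} (hi : 1 ≤ i)
    (hN : ∀ r, (r, N) ∈ lam \ mu → R (r, N) ≠ i)
    (hNW : N ≤ (lam \ mu).sup Prod.snd + 1) :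
    ceqOn (lam \ mu) (betaR lam N i R) = ceqOn (lam \ mu) R := by
  funext r
  obtain ⟨h1, h2, h3, -, h5, h6, h7⟩ := beta_facts S hR hi hN
  have ht := Hh_anti S hR (i - 1)
  have he := Hh_anti S hR (i + 1)
  have hnf := H_NF S hR N i
  have m := iota_mix ht he hnf (r + 1)
  have e1 := ceq_mix S hR hi hNW r
  have e2 := ceq_mix S h1 hi hNW r
  rw [h3, h2 _ (by omega), h2 _ (by omega), m] at e2
  have e3 : ∀ j, ((r, j) ∈ (lam \ mu) ∧ (r + 1, j) ∈ (lam \ mu) ∧ (betaR lam N i R (r, j) = betaR lam N i R (r + 1, j) ∨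
        j < N ∧ (betaR lam N i R (r, j) = i ∨ betaR lam N i R (r, j) = i + 1) ∧ (betaR lam N i R (r + 1, j) = i ∨ betaR lam N i R (r + 1, j) = i + 1)))
      ↔ ((r, j) ∈ (lam \ mu) ∧ (r + 1, j) ∈ (lam \ mu) ∧ (R (r, j) = R (r + 1, j) ∨
        j < N ∧ (R (r, j) = i ∨ R (r, j) = i + 1) ∧ (R (r + 1, j) = i ∨ R (r + 1, j) = i + 1))) := by
    intro j
    refine and_congr_right fun _ => and_congr_right fun _ => ?_
    have a1 := h6 (r, j)
    have a2 := h6 (r + 1, j)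
    have b1 := h7 (r, j)
    have b2 := h7 (r + 1, j)
    have c1 := h5 (r, j)
    have c2 := h5 (r + 1, j)
    simp only at c1 c2
    by_cases hj : j < N
    · omega
    · rw [c1 (by omega), c2 (by omega)]
  simp only [e3] at e2
  omega

end


/-! ### The core alternant identity -/

lemma rset_finite (s : Finset Cell) (n : ℕ) :
    {R : Cell → ℕ | IsRPPOn s R ∧ RespectsFlagS s (fun _ => n) R}.Finite := by
  refine (Set.finite_range (fun (f : s → Fin (n + 1)) (c : Cell) =>
    if h : c ∈ s then (f ⟨c, h⟩ : ℕ) else 0)).subset ?_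
  rintro R ⟨h1, h2⟩
  refine ⟨fun c => ⟨R c, Nat.lt_succ_of_le (h2 c c.2)⟩, ?_⟩
  funext c
  by_cases hc : c ∈ s
  · simp [hc]
  · simp [hc, h1.2.1 c hc]

def RF (s : Finset Cell) (n : ℕ) : Finset (Cell → ℕ) := (rset_finite s n).toFinset

lemma mem_RF {s : Finset Cell} {n : ℕ} {R : Cell → ℕ} :
    R ∈ RF s n ↔ IsRPPOn s R ∧ ∀ c ∈ s, R c ≤ n := by
  unfold RF
  rw [Set.Finite.mem_toFinset]
  exact Iff.rfl

def Wd (s : Finset Cell) : ℕ := s.sup Prod.snd + 1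

def viol (s : Finset Cell) (R : Cell → ℕ) (j v : ℕ) : Prop :=
  cntC s R (v + 1) (Finset.Ico j (Wd s)) < cntC s R (v + 2) (Finset.Ico j (Wd s))

def GoodR (s : Finset Cell) (R : Cell → ℕ) : Prop := ∀ j v, ¬ viol s R j v

def IsBad (s : Finset Cell) (R : Cell → ℕ) (p : ℕ × ℕ) : Prop :=
  viol s R p.1 p.2 ∧ (∀ u, u < p.2 → ¬ viol s R p.1 u) ∧ ∀ j u, p.1 < j → ¬ viol s R j u

lemma viol_lt {s : Finset Cell} {R : Cell → ℕ} {j v : ℕ} (h : viol s R j v) : j < Wd s := by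
  by_contra hc
  unfold viol cntC at h
  rw [Finset.Ico_eq_empty (by omega)] at h
  simp at h

lemma bad_exists {s : Finset Cell} {R : Cell → ℕ} (h : ¬ GoodR s R) : ∃ p, IsBad s R p := by
  unfold GoodR at h
  push Not at h
  obtain ⟨j, v, hv⟩ := h
  have hP : ∃ v, viol s R (Nat.findGreatest (fun j => ∃ v, viol s R j v) (Wd s)) v :=
    Nat.findGreatest_spec (P := fun j => ∃ v, viol s R j v) (viol_lt hv).le ⟨v, hv⟩
  refine ⟨(_, Nat.find hP), Nat.find_spec hP, fun u hu => Nat.find_min hP hu, fun j u hj hc => ?_⟩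
  exact Nat.findGreatest_is_greatest (P := fun j => ∃ v, viol s R j v) (n := Wd s) hj
    (viol_lt hc).le ⟨u, hc⟩

lemma bad_unique {s : Finset Cell} {R : Cell → ℕ} {p q : ℕ × ℕ} (hp : IsBad s R p)
    (hq : IsBad s R q) : p = q := by
  have h1 : p.1 = q.1 := by
    rcases lt_trichotomy p.1 q.1 with h | h | h
    · exact absurd hq.1 (hp.2.2 _ _ h)
    · exact h
    · exact absurd hp.1 (hq.2.2 _ _ h)
  have h2 : p.2 = q.2 := by
    rcases lt_trichotomy p.2 q.2 with h | h | h
    · exact absurd hp.1 (h1 ▸ hq.2.1 _ h)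
    · exact h
    · exact absurd hq.1 (h1 ▸ hp.2.1 _ h)
  exact Prod.ext h1 h2

lemma cntC_cons (s : Finset Cell) (R : Cell → ℕ) (v : ℕ) {j W : ℕ} (h : j < W) :
    cntC s R v (Finset.Ico j W) = (if colC s R v j then 1 else 0) + cntC s R v (Finset.Ico (j + 1) W) := by
  unfold cntC
  simp only [Finset.card_filter]
  rw [Finset.sum_eq_sum_Ico_succ_bot h]

lemma cntC_split (s : Finset Cell) (R : Cell → ℕ) (v : ℕ) {j W : ℕ} (h : j ≤ W) :
    cntC s R v (Finset.range W) = cntC s R v (Finset.range j) + cntC s R v (Finset.Ico j W) := by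
  unfold cntC
  simp only [Finset.card_filter]
  rw [Finset.sum_range_add_sum_Ico _ h]

lemma wt_cnt (s : Finset Cell) (R : Cell → ℕ) (v : ℕ) :
    wtRPP s R v = cntC s R v (Finset.range (Wd s)) := by
  unfold wtRPP cntC colC Wd
  congr

lemma bad_facts {s : Finset Cell} {R : Cell → ℕ} {p : ℕ × ℕ} (hp : IsBad s R p) :
    p.1 < Wd s ∧ ¬ colC s R (p.2 + 1) p.1 ∧ colC s R (p.2 + 2) p.1 ∧
    cntC s R (p.2 + 2) (Finset.Ico p.1 (Wd s)) = cntC s R (p.2 + 1) (Finset.Ico p.1 (Wd s)) + 1 := by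
  have h0 := viol_lt hp.1
  have h1 := hp.1
  have h2 := hp.2.2 (p.1 + 1) p.2 (by omega)
  unfold viol at h1 h2
  rw [cntC_cons _ _ _ h0, cntC_cons _ _ _ h0] at h1 ⊢
  split_ifs at h1 ⊢ with a b <;> first | omega | (refine ⟨h0, ?_, ?_, ?_⟩ <;> first | assumption | omega)

lemma viol_congr {s : Finset Cell} {R R' : Cell → ℕ} {j v J : ℕ} (hJ : J ≤ j)
    (h : ∀ c : Cell, J ≤ c.2 → R' c = R c) : viol s R' j v ↔ viol s R j v := by
  have : ∀ v, cntC s R' v (Finset.Ico j (Wd s)) = cntC s R v (Finset.Ico j (Wd s)) := by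
    intro v
    unfold cntC
    congr 1
    refine Finset.filter_congr fun k hk => ?_
    have hk := (Finset.mem_Ico.1 hk).1
    unfold colC
    refine exists_congr fun i => ?_
    rw [h (i, k) (hJ.trans hk)]
  unfold viol
  rw [this, this]

lemma bad_congr {s : Finset Cell} {R R' : Cell → ℕ} {p : ℕ × ℕ} (hp : IsBad s R p)
    (h : ∀ c : Cell, p.1 ≤ c.2 → R' c = R c) : IsBad s R' p := by
  refine ⟨(viol_congr le_rfl h).2 hp.1, fun u hu hc => hp.2.1 u hu ((viol_congr le_rfl h).1 hc),
    fun j u hj hc => hp.2.2 j u hj ((viol_congr hj.le h).1 hc)⟩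

def badMap (lam mu : Finset Cell) (R : Cell → ℕ) : Cell → ℕ :=
  if h : ∃ p, IsBad (lam \ mu) R p then betaR lam h.choose.1 (h.choose.2 + 1) R else R

lemma badMap_eq {lam mu : Finset Cell} {R : Cell → ℕ} {p : ℕ × ℕ} (hp : IsBad (lam \ mu) R p) :
    badMap lam mu R = betaR lam p.1 (p.2 + 1) R := by
  have h : ∃ p, IsBad (lam \ mu) R p := ⟨p, hp⟩
  unfold badMap
  rw [dif_pos h, bad_unique h.choose_spec hp]

section
variable {lam mu : Finset Cell} (S : Skew lam mu)

include S in
lemma beta_mem {R : Cell → ℕ} {n : ℕ} (hR : R ∈ RF (lam \ mu) n) {N i : ℕ} (hi : 1 ≤ i) (hin : i + 1 ≤ n)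
    (hN : ∀ r, (r, N) ∈ lam \ mu → R (r, N) ≠ i) : betaR lam N i R ∈ RF (lam \ mu) n := by
  rw [mem_RF] at hR ⊢
  obtain ⟨h1, -, -, -, -, h6, h7⟩ := beta_facts S hR.1 hi hN
  refine ⟨h1, fun c hc => ?_⟩
  have := hR.2 c hc
  have := h6 c
  have := h7 c
  omega

include S in
lemma bad_main {n : ℕ} {R : Cell → ℕ} (hR : R ∈ RF (lam \ mu) n) {p : ℕ × ℕ}
    (hp : IsBad (lam \ mu) R p) :
    p.2 + 1 < n ∧
    badMap lam mu R ∈ RF (lam \ mu) n ∧ IsBad (lam \ mu) (badMap lam mu R) p ∧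
    badMap lam mu (badMap lam mu R) = R ∧
    ceqOn (lam \ mu) (badMap lam mu R) = ceqOn (lam \ mu) R ∧
    wtRPP (lam \ mu) (badMap lam mu R) (p.2 + 1) + 1 = wtRPP (lam \ mu) R (p.2 + 2) ∧
    wtRPP (lam \ mu) (badMap lam mu R) (p.2 + 2) = wtRPP (lam \ mu) R (p.2 + 1) + 1 ∧
    ∀ v, v ≠ p.2 + 1 → v ≠ p.2 + 2 → wtRPP (lam \ mu) (badMap lam mu R) v = wtRPP (lam \ mu) R v := by
  have hR' := (mem_RF.1 hR).1
  obtain ⟨f1, f2, f3, f4⟩ := bad_facts hp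
  have hN : ∀ r, (r, p.1) ∈ lam \ mu → R (r, p.1) ≠ p.2 + 1 := fun r hr hc => f2 ⟨r, hr, hc⟩
  have hn : p.2 + 1 < n := by
    obtain ⟨r, hr, hc⟩ := f3
    have := (mem_RF.1 hR).2 _ hr
    omega
  obtain ⟨h1, -, -, h4, h5, h6, h7⟩ := beta_facts S hR' (i := p.2 + 1) (by omega) hN
  obtain ⟨c1, c2, c3⟩ := beta_cnt S hR' (i := p.2 + 1) (by omega) hN
  have hb := bad_congr hp h5
  have e1 := badMap_eq hp
  have e2 := badMap_eq hb
  have hcc : ∀ v, cntC (lam \ mu) (betaR lam p.1 (p.2 + 1) R) v (Finset.Ico p.1 (Wd (lam \ mu)))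
      = cntC (lam \ mu) R v (Finset.Ico p.1 (Wd (lam \ mu))) := by
    intro v
    unfold cntC
    congr 1
    refine Finset.filter_congr fun k hk => ?_
    have hk := (Finset.mem_Ico.1 hk).1
    unfold colC
    refine exists_congr fun i => ?_
    rw [h5 (i, k) hk]
  rw [e1]
  simp only [wt_cnt, cntC_split _ _ _ f1.le, hcc]
  refine ⟨hn, beta_mem S hR (by omega) (by omega) hN, hb, ?_, ?_, ?_, ?_, ?_⟩
  · rw [e2]; exact h4
  · exact beta_ceq S hR' (by omega) hN (le_of_lt f1)
  · have : p.2 + 1 + 1 = p.2 + 2 := rfl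
    rw [this] at c1
    omega
  · have : p.2 + 1 + 1 = p.2 + 2 := rfl
    rw [this] at c2
    omega
  · intro v hv hv'
    congr 1
    unfold cntC
    congr 1
    exact Finset.filter_congr fun k hk => c3 v k hv hv'

variable {K : Type*} [CommRing K]

/-- alternant with exponents `a_j` -/
def altD (K : Type*) [CommRing K] (n : ℕ) (a : ℕ → ℕ) : MvPolynomial (Fin n) K :=
  Matrix.det (Matrix.of (fun i j : Fin n => MvPolynomial.X i ^ (a j + (n - 1 - j)) :
    Fin n → Fin n → MvPolynomial (Fin n) K))

def monW (K : Type*) [CommRing K] (n : ℕ) (a : ℕ → ℕ) : MvPolynomial (Fin n) K :=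
  ∏ k : Fin n, MvPolynomial.X k ^ a k

def wv (s : Finset Cell) (R : Cell → ℕ) : ℕ → ℕ := fun k => wtRPP s R (k + 1)

lemma altD_swap {n : ℕ} {a b : ℕ → ℕ} {v : ℕ} (hv : v + 1 < n) (h1 : b v + 1 = a (v + 1))
    (h2 : b (v + 1) = a v + 1) (h3 : ∀ u, u ≠ v → u ≠ v + 1 → b u = a u) :
    altD K n a + altD K n b = 0 := by
  have hne : (⟨v, by omega⟩ : Fin n) ≠ ⟨v + 1, hv⟩ := by
    intro h; have := congrArg Fin.val h; simp at this
  have : altD K n b = (Equiv.Perm.sign (Equiv.swap (⟨v, by omega⟩ : Fin n) ⟨v + 1, hv⟩) : ℤ) *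
      altD K n a := by
    unfold altD
    rw [← Matrix.det_permute']
    congr 1
    ext i j
    simp only [Matrix.of_apply, Matrix.submatrix_apply, id]
    congr 2
    by_cases j1 : j = ⟨v, by omega⟩
    · subst j1
      rw [Equiv.swap_apply_left]
      simp only
      omega
    by_cases j2 : j = ⟨v + 1, hv⟩
    · subst j2
      rw [Equiv.swap_apply_right]
      simp only
      omega
    · rw [Equiv.swap_apply_of_ne_of_ne j1 j2]
      rw [h3 j (fun h => j1 (Fin.ext h)) (fun h => j2 (Fin.ext h))]
  rw [this, Equiv.Perm.sign_swap hne]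
  simp

lemma altD_zero {n : ℕ} {a : ℕ → ℕ} {v : ℕ} (hv : v + 1 < n) (h1 : a v + 1 = a (v + 1)) :
    altD K n a = 0 := by
  have hne : (⟨v, by omega⟩ : Fin n) ≠ ⟨v + 1, hv⟩ := by
    intro h; have := congrArg Fin.val h; simp at this
  refine Matrix.det_zero_of_column_eq hne fun i => ?_
  simp only [Matrix.of_apply]
  congr 1
  omega

include S in
lemma bad_cancel (n : ℕ) (f : (ℕ → ℕ) → K) :
    ∑ R ∈ RF (lam \ mu) n, MvPolynomial.C (f (ceqOn (lam \ mu) R)) * altD K n (wv (lam \ mu) R) =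
    ∑ R ∈ (RF (lam \ mu) n).filter (GoodR (lam \ mu)),
      MvPolynomial.C (f (ceqOn (lam \ mu) R)) * altD K n (wv (lam \ mu) R) := by
  rw [← Finset.sum_filter_add_sum_filter_not (RF (lam \ mu) n) (GoodR (lam \ mu))]
  rw [add_eq_left]
  refine Finset.sum_involution (fun R _ => badMap lam mu R) ?_ ?_ ?_ ?_
  · intro R hR
    obtain ⟨h1, h2⟩ := Finset.mem_filter.1 hR
    obtain ⟨p, hp⟩ := bad_exists h2
    obtain ⟨m1, m2, m3, m4, m5, m6, m7, m8⟩ := bad_main S h1 hp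
    rw [m5, ← mul_add, altD_swap (v := p.2) m1 m6 m7, mul_zero]
    intro u h1 h2
    exact m8 _ (by omega) (by omega)
  · intro R hR hne heq
    obtain ⟨h1, h2⟩ := Finset.mem_filter.1 hR
    obtain ⟨p, hp⟩ := bad_exists h2
    obtain ⟨m1, m2, m3, m4, m5, m6, m7, m8⟩ := bad_main S h1 hp
    rw [heq] at m6
    exact hne (by rw [altD_zero m1 m6, mul_zero])
  · intro R hR
    obtain ⟨h1, h2⟩ := Finset.mem_filter.1 hR
    obtain ⟨p, hp⟩ := bad_exists h2
    obtain ⟨m1, m2, m3, m4, m5, m6, m7, m8⟩ := bad_main S h1 hp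
    exact Finset.mem_filter.2 ⟨m2, fun hg => hg _ _ m3.1⟩
  · intro R hR
    obtain ⟨h1, h2⟩ := Finset.mem_filter.1 hR
    obtain ⟨p, hp⟩ := bad_exists h2
    obtain ⟨m1, m2, m3, m4, m5, m6, m7, m8⟩ := bad_main S h1 hp
    exact m4

def FF (K : Type*) [CommRing K] (s : Finset Cell) (n : ℕ) (f : (ℕ → ℕ) → K) : MvPolynomial (Fin n) K :=
  ∑ R ∈ RF s n, MvPolynomial.C (f (ceqOn s R)) * monW K n (wv s R)

lemma rename_FF (s : Finset Cell) (n : ℕ) (f : (ℕ → ℕ) → K) (σ : Equiv.Perm (Fin n)) :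
    MvPolynomial.rename σ (FF K s n f) =
    ∑ R ∈ RF s n, MvPolynomial.C (f (ceqOn s R)) *
      ∏ k : Fin n, MvPolynomial.X (σ k) ^ wv s R k := by
  unfold FF monW
  simp [map_sum, map_prod]

include S in
lemma FF_swap (n : ℕ) (f : (ℕ → ℕ) → K) (v : ℕ) (hv : v + 1 < n) :
    MvPolynomial.rename (Equiv.swap (⟨v, by omega⟩ : Fin n) ⟨v + 1, hv⟩) (FF K (lam \ mu) n f) =
      FF K (lam \ mu) n f := by
  rw [rename_FF]
  unfold FF
  have hN : ∀ (R : Cell → ℕ) r, (r, Wd (lam \ mu)) ∈ lam \ mu → R (r, Wd (lam \ mu)) ≠ v + 1 := by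
    intro R r hr
    have : Wd (lam \ mu) ≤ (lam \ mu).sup Prod.snd := Finset.le_sup (f := Prod.snd) hr
    unfold Wd at this
    omega
  refine Finset.sum_nbij' (fun R => betaR lam (Wd (lam \ mu)) (v + 1) R)
    (fun R => betaR lam (Wd (lam \ mu)) (v + 1) R) ?_ ?_ ?_ ?_ ?_
  · exact fun R hR => beta_mem S hR (by omega) (by omega) (hN R)
  · exact fun R hR => beta_mem S hR (by omega) (by omega) (hN R)
  · exact fun R hR => (beta_facts S (mem_RF.1 hR).1 (by omega) (hN R)).2.2.2.1
  · exact fun R hR => (beta_facts S (mem_RF.1 hR).1 (by omega) (hN R)).2.2.2.1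
  · intro R hR
    have hR' := (mem_RF.1 hR).1
    rw [beta_ceq S hR' (by omega) (hN R) le_rfl]
    congr 1
    obtain ⟨c1, c2, c3⟩ := beta_cnt S hR' (Nat.succ_pos v) (hN R)
    unfold monW
    rw [← Equiv.prod_comp (Equiv.swap (⟨v, by omega⟩ : Fin n) ⟨v + 1, hv⟩)]
    refine Finset.prod_congr rfl fun k _ => ?_
    rw [Equiv.swap_apply_self]
    congr 1
    unfold wv
    rw [wt_cnt, wt_cnt]
    by_cases j1 : k = ⟨v, by omega⟩
    · subst j1
      rw [Equiv.swap_apply_left]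
      exact c1.symm
    by_cases j2 : k = ⟨v + 1, hv⟩
    · subst j2
      rw [Equiv.swap_apply_right]
      exact c2.symm
    · rw [Equiv.swap_apply_of_ne_of_ne j1 j2]
      unfold cntC
      congr 1
      refine Finset.filter_congr fun j hj => (c3 _ j ?_ ?_).symm
      · intro h; exact j1 (Fin.ext (by simpa using h))
      · intro h; exact j2 (Fin.ext (by simpa using h))

include S in
lemma FF_sym (n : ℕ) (f : (ℕ → ℕ) → K) (σ : Equiv.Perm (Fin n)) :
    MvPolynomial.rename σ (FF K (lam \ mu) n f) = FF K (lam \ mu) n f := by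
  cases n with
  | zero =>
    have : σ = 1 := Subsingleton.elim _ _
    subst this
    exact MvPolynomial.rename_id_apply _
  | succ n =>
    have : σ ∈ Submonoid.closure (Set.range fun i : Fin n => Equiv.swap i.castSucc i.succ) := by
      rw [Equiv.Perm.mclosure_swap_castSucc_succ]; trivial
    induction this using Submonoid.closure_induction with
    | mem x hx =>
      obtain ⟨i, rfl⟩ := hx
      exact FF_swap S (n + 1) f i (by omega)
    | one => exact MvPolynomial.rename_id_apply _
    | mul x y _ _ hx hy =>
      rw [Equiv.Perm.coe_mul, ← MvPolynomial.rename_rename, hy, hx]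

include S in
theorem core_identity (n : ℕ) (f : (ℕ → ℕ) → K) :
    FF K (lam \ mu) n f * altD K n (fun _ => 0) =
    ∑ R ∈ (RF (lam \ mu) n).filter (GoodR (lam \ mu)),
      MvPolynomial.C (f (ceqOn (lam \ mu) R)) * altD K n (wv (lam \ mu) R) := by
  rw [← bad_cancel S]
  unfold altD
  simp only [Matrix.det_apply, Matrix.of_apply, Finset.mul_sum]
  rw [Finset.sum_comm]
  refine Finset.sum_congr rfl fun σ _ => ?_
  rw [← FF_sym S n f σ, rename_FF, Finset.sum_mul]
  refine Finset.sum_congr rfl fun R _ => ?_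
  rw [mul_assoc, mul_smul_comm, ← Finset.prod_mul_distrib]
  simp only [zero_add, pow_add]

end

lemma altD_ne_zero {K : Type*} [CommRing K] [IsDomain K] (n : ℕ) :
    altD K n (fun _ => 0) ≠ 0 := by
  have h : (Matrix.vandermonde (fun i : Fin n => (MvPolynomial.X i : MvPolynomial (Fin n) K))).det ≠ 0 := by
    rw [Matrix.det_vandermonde_ne_zero_iff]
    exact MvPolynomial.X_injective
  intro hc
  apply h
  have : Matrix.vandermonde (fun i : Fin n => (MvPolynomial.X i : MvPolynomial (Fin n) K)) =
      (Matrix.of (fun i j : Fin n => MvPolynomial.X i ^ (0 + (n - 1 - j)) :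
    Fin n → Fin n → MvPolynomial (Fin n) K)).submatrix id Fin.revPerm := by
    ext i j
    simp only [Matrix.vandermonde_apply, Matrix.submatrix_apply, Matrix.of_apply, id]
    congr 2
    simp [Fin.revPerm, Fin.val_rev]
    omega
  rw [this, Matrix.det_permute']
  unfold altD at hc
  rw [hc, mul_zero]


/-! ### Reading words -/

def before (c d : Cell) : Prop := d.1 < c.1 ∨ (c.1 = d.1 ∧ c.2 < d.2)

def upc (p : Cell → Prop) : Prop := ∀ c d, before c d → p c → p d

lemma two_yam {W : ℕ} {t h e : ℕ → ℕ} (hh : ∀ j k, j ≤ k → h k ≤ h j)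
    (he : ∀ j k, j ≤ k → e k ≤ e j) (h1 : ∀ j, t j ≤ h j) (h2 : ∀ j, h j ≤ e j) :
    (∀ p, upc p → ((Finset.range W).filter (fun j => h j < e j ∧ p (e j - 1, j))).card ≤
      ((Finset.range W).filter (fun j => t j < h j ∧ p (h j - 1, j))).card) ↔
    ∀ J, ((Finset.Ico J W).filter (fun j => h j < e j)).card ≤
      ((Finset.Ico J W).filter (fun j => t j < h j)).card := by
  simp only [Finset.card_filter]
  constructor
  · intro Y J
    rcases Nat.lt_or_ge W J with hJW | hJW
    · rw [Finset.Ico_eq_empty (by omega)]; simp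
    have key : ∃ p, upc p ∧ (∀ k, J ≤ k →
        (if t k < h k ∧ p (h k - 1, k) then 1 else 0) + (if h k < e k then 1 else 0) ≤
        (if h k < e k ∧ p (e k - 1, k) then 1 else 0) + (if t k < h k then 1 else 0)) ∧
        (∀ k, k < J → t k < h k ∧ p (h k - 1, k) → h k < e k ∧ p (e k - 1, k)) := by
      by_cases hK : ∃ K, K < J ∧ t K < h K ∧ h K = e K
      · obtain ⟨K, ⟨k1, k2, k3⟩, kmax⟩ : ∃ K, (K < J ∧ t K < h K ∧ h K = e K) ∧
            ∀ k, (k < J ∧ t k < h k ∧ h k = e k) → k ≤ K := by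
          obtain ⟨K0, hK0⟩ := hK
          exact ⟨_, Nat.findGreatest_spec (P := fun K => K < J ∧ t K < h K ∧ h K = e K) hK0.1.le hK0,
            fun k hk => Nat.le_findGreatest hk.1.le hk⟩
        refine ⟨fun d => before (h K - 1, K) d, ?_, ?_, ?_⟩
        · intro c d hcd hc
          unfold before at *
          omega
        · intro k hk
          have a1 := h1 k
          have a2 := h2 k
          have b1 := hh K k (by omega)
          have b2 := he K k (by omega)
          unfold before
          simp only
          split_ifs <;> omega
        · intro k hk
          have a1 := h1 k
          have a2 := h2 k
          have b1 := hh K k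
          have b2 := he K k
          have b3 := hh k K
          have b4 := he k K
          have b5 := kmax k
          unfold before
          simp only
          omega
      · push Not at hK
        refine ⟨fun _ => True, fun _ _ _ _ => trivial, ?_, ?_⟩
        · intro k hk
          simp only [and_true]
          omega
        · intro k hk
          have := hK k hk
          have := h2 k
          simp only [and_true]
          omega
    obtain ⟨p, hp, c1, c2⟩ := key
    have Y' := Y p hp
    rw [← Finset.sum_range_add_sum_Ico _ hJW, ← Finset.sum_range_add_sum_Ico _ hJW] at Y'
    have s1 : ∑ k ∈ Finset.range J, (if t k < h k ∧ p (h k - 1, k) then 1 else 0) ≤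
        ∑ k ∈ Finset.range J, (if h k < e k ∧ p (e k - 1, k) then 1 else 0) := by
      refine Finset.sum_le_sum fun k hk => ?_
      have := c2 k (Finset.mem_range.1 hk)
      split_ifs <;> first | omega | tauto
    have s2 := Finset.sum_le_sum (s := Finset.Ico J W) (fun k hk => c1 k (Finset.mem_Ico.1 hk).1)
    rw [Finset.sum_add_distrib, Finset.sum_add_distrib] at s2
    omega
  · intro G p hp
    have mixp : ∀ k, t k < h k → h k < e k → p (e k - 1, k) → p (h k - 1, k) := by
      intro k a b
      refine hp _ _ ?_
      unfold before
      simp only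
      omega
    by_cases hK : ∃ J, J < W ∧ t J = h J ∧ h J < e J ∧ p (e J - 1, J)
    · obtain ⟨J, ⟨k0, k1, k2, k3⟩, kmin⟩ : ∃ J, (J < W ∧ t J = h J ∧ h J < e J ∧ p (e J - 1, J)) ∧
          ∀ k, k < J → ¬ (k < W ∧ t k = h k ∧ h k < e k ∧ p (e k - 1, k)) :=
        ⟨Nat.find hK, Nat.find_spec hK, fun k hk => Nat.find_min hK hk⟩
      have G' := G J
      rw [← Finset.sum_range_add_sum_Ico _ k0.le, ← Finset.sum_range_add_sum_Ico _ k0.le]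
      have s1 : ∑ k ∈ Finset.range J, (if h k < e k ∧ p (e k - 1, k) then 1 else 0) ≤
         ∑ k ∈ Finset.range J, (if t k < h k ∧ p (h k - 1, k) then 1 else 0) := by
        refine Finset.sum_le_sum fun k hk => ?_
        have hk := Finset.mem_range.1 hk
        have a := kmin k hk
        have b := h1 k
        have c := mixp k
        have : h k < e k ∧ p (e k - 1, k) → t k < h k ∧ p (h k - 1, k) := by
          rintro ⟨x, y⟩
          have : t k < h k := by
            by_contra hc
            exact a ⟨by omega, by omega, x, y⟩
          exact ⟨this, c this x y⟩
        split_ifs <;> first | omega | tauto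
      have s2 : ∀ k ∈ Finset.Ico J W,
          (if h k < e k ∧ p (e k - 1, k) then 1 else 0) + (if t k < h k then 1 else 0) ≤
          (if t k < h k ∧ p (h k - 1, k) then 1 else 0) + (if h k < e k then 1 else 0) := by
        intro k hk
        have hk := (Finset.mem_Ico.1 hk).1
        have c := mixp k
        have a1 := h1 k
        have a2 := h2 k
        have : t k < h k → h k = e k → p (h k - 1, k) := by
          intro x y
          refine hp _ _ ?_ k3
          have := he J k hk
          have : k ≠ J := by rintro rfl; omega
          unfold before
          simp only
          omega
        by_cases q1 : t k < h k <;> by_cases q2 : h k < e k <;> by_cases q3 : p (e k - 1, k) <;>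
          by_cases q4 : p (h k - 1, k) <;> simp only [q1, q2, q3, q4, if_true, if_false, and_true, and_false, true_and, false_and] <;>
          first | omega | (exfalso; exact q4 (this q1 (by omega))) | (exfalso; exact q4 (c q1 q2 q3))
      have s2 := Finset.sum_le_sum s2
      rw [Finset.sum_add_distrib, Finset.sum_add_distrib] at s2
      omega
    · push Not at hK
      refine Finset.sum_le_sum fun k hk => ?_
      have hk := Finset.mem_range.1 hk
      have b := h1 k
      have c := mixp k
      have : h k < e k ∧ p (e k - 1, k) → t k < h k ∧ p (h k - 1, k) := by
        rintro ⟨x, y⟩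
        have : t k < h k := by
          by_contra hc
          exact hK k hk (by omega) x y
        exact ⟨this, c this x y⟩
      split_ifs <;> first | omega | tauto

/-- a retained cell -/
def ret (s : Finset Cell) (R : Cell → ℕ) (c : Cell) : Prop :=
  c ∈ s ∧ ((c.1 + 1, c.2) ∉ s ∨ R (c.1 + 1, c.2) ≠ R c)

def rowL (s : Finset Cell) (R : Cell → ℕ) (i : ℕ) : List Cell :=
  ((rowList s i).filter (fun j => decide ((i + 1, j) ∉ s ∨ R (i + 1, j) ≠ R (i, j)))).map
      (fun j => (i, j))

def LL (s : Finset Cell) (R : Cell → ℕ) : List Cell :=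
  ((List.range (s.sup Prod.fst + 1)).reverse.map (rowL s R)).flatten

lemma mem_rowL {s : Finset Cell} {R : Cell → ℕ} {i : ℕ} {c : Cell} :
    c ∈ rowL s R i ↔ ret s R c ∧ c.1 = i := by
  obtain ⟨a, b⟩ := c
  unfold rowL rowList ret
  simp only [List.mem_map, List.mem_filter, List.mem_range, decide_eq_true_eq, Prod.mk.injEq]
  constructor
  · rintro ⟨j, ⟨⟨h1, h2⟩, h3⟩, rfl, rfl⟩
    exact ⟨⟨h2, h3⟩, rfl⟩
  · rintro ⟨⟨h1, h2⟩, rfl⟩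
    exact ⟨b, ⟨⟨Nat.lt_succ_of_le (Finset.le_sup (f := Prod.snd) h1), h1⟩, h2⟩, rfl, rfl⟩

lemma mem_LL {s : Finset Cell} {R : Cell → ℕ} {c : Cell} : c ∈ LL s R ↔ ret s R c := by
  unfold LL
  simp only [List.mem_flatten, List.mem_map, List.mem_reverse, List.mem_range]
  constructor
  · rintro ⟨l, ⟨i, _, rfl⟩, h⟩
    exact (mem_rowL.1 h).1
  · intro h
    exact ⟨_, ⟨c.1, Nat.lt_succ_of_le (Finset.le_sup (f := Prod.fst) h.1), rfl⟩, mem_rowL.2 ⟨h, rfl⟩⟩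

lemma rowL_pw (s : Finset Cell) (R : Cell → ℕ) (i : ℕ) : (rowL s R i).Pairwise before := by
  unfold rowL rowList
  rw [List.pairwise_map]
  refine List.Pairwise.filter _ (List.Pairwise.filter _ ?_)
  refine List.pairwise_lt_range.imp ?_
  intro a b h
  exact Or.inr ⟨rfl, h⟩

lemma LL_pw (s : Finset Cell) (R : Cell → ℕ) : (LL s R).Pairwise before := by
  unfold LL
  rw [List.pairwise_flatten]
  constructor
  · intro l hl
    obtain ⟨i, _, rfl⟩ := List.mem_map.1 hl
    exact rowL_pw s R i
  · rw [List.pairwise_map, List.pairwise_reverse]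
    refine List.pairwise_lt_range.imp ?_
    intro a b h x hx y hy
    left
    rw [(mem_rowL.1 hx).2, (mem_rowL.1 hy).2]
    exact h

lemma rowWord_LL (s : Finset Cell) (R : Cell → ℕ) : rppRowWord s R = (LL s R).map R := by
  unfold rppRowWord LL rowL
  rw [List.map_flatten, List.map_map]
  congr 1
  refine List.map_congr_left fun i _ => ?_
  simp only [Function.comp, List.map_map]
  congr
  funext j
  exact decide_eq_decide.2 Iff.rfl

lemma heights_LL (s : Finset Cell) (R : Cell → ℕ) :
    rppHeights s R = (LL s R).map (fun c => c.1 + 1) := by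
  unfold rppHeights LL rowL
  rw [List.map_flatten, List.map_map]
  congr 1
  refine List.map_congr_left fun i _ => ?_
  simp only [Function.comp, List.map_map]
  congr
  funext j
  exact decide_eq_decide.2 Iff.rfl

lemma before_irr (c : Cell) : ¬ before c c := by unfold before; omega

lemma LL_nodup (s : Finset Cell) (R : Cell → ℕ) : (LL s R).Nodup :=
  (LL_pw s R).imp (fun {a b} h => by rintro rfl; exact before_irr _ h)

lemma filter_drop (L : List Cell) (hL : L.Pairwise before) (p : Cell → Prop) (hp : upc p) :
    ∃ k, L.filter p = L.drop k := by
  induction L with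
  | nil => exact ⟨0, rfl⟩
  | cons c L ih =>
    rw [List.pairwise_cons] at hL
    by_cases hc : p c
    · refine ⟨0, ?_⟩
      rw [List.drop_zero, List.filter_eq_self]
      intro d hd
      rcases List.mem_cons.1 hd with rfl | hd
      · simpa using hc
      · simpa using hp _ _ (hL.1 d hd) hc
    · obtain ⟨k, hk⟩ := ih hL.2
      refine ⟨k + 1, ?_⟩
      rw [List.filter_cons_of_neg (by simpa using hc), hk, List.drop_succ_cons]

lemma drop_filter (L : List Cell) (hL : L.Pairwise before) (k : ℕ) :
    ∃ p, upc p ∧ L.filter p = L.drop k := by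
  obtain ⟨A, D, h1, h2⟩ : ∃ A D, L = A ++ D ∧ L.drop k = D :=
    ⟨L.take k, L.drop k, (List.take_append_drop k L).symm, rfl⟩
  rw [h2]
  subst h1
  replace hL := List.pairwise_append.1 hL
  refine ⟨fun d => ∃ c ∈ D, c = d ∨ before c d, ?_, ?_⟩
  · rintro c d h ⟨x, hx, h'⟩
    refine ⟨x, hx, Or.inr ?_⟩
    rcases h' with rfl | h'
    · exact h
    · unfold before at *; omega
  · rw [List.filter_append]
    convert List.nil_append _
    · rw [List.filter_eq_nil_iff]
      intro d hd
      simp only [decide_eq_true_eq]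
      rintro ⟨x, hx, h'⟩
      have := hL.2.2 d hd x hx
      rcases h' with rfl | h'
      · exact before_irr _ this
      · unfold before at *; omega
    · symm
      rw [List.filter_eq_self]
      intro d hd
      simp only [decide_eq_true_eq]
      exact ⟨d, hd, Or.inl rfl⟩

section
variable {lam mu : Finset Cell} (S : Skew lam mu)

include S in
lemma ret_iff {R : Cell → ℕ} (hR : IsRPPOn (lam \ mu) R) (v r j : ℕ) :
    (ret (lam \ mu) R (r, j) ∧ R (r, j) = v + 1) ↔
      (Hh lam R v j < Hh lam R (v + 1) j ∧ r = Hh lam R (v + 1) j - 1) := by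
  have a1 := Hh_iff S hR v j r
  have a2 := Hh_iff S hR (v + 1) j r
  have a3 := Hh_iff S hR (v + 1) j (r + 1)
  have a9 : (r, j) ∈ lam \ mu → (r, j) ∈ lam := fun h => (Finset.mem_sdiff.1 h).1
  have b9 : (r + 1, j) ∈ lam \ mu → (r + 1, j) ∈ lam := fun h => (Finset.mem_sdiff.1 h).1
  have a6 := hR.2.1 (r, j)
  have a5 := hR.2.2.2 r j
  constructor
  · rintro ⟨⟨h1, h2⟩, h3⟩
    simp only at h2
    have b2 := a2.2 ⟨a9 h1, by omega⟩
    have b1 : ¬ r < Hh lam R v j := fun h => by have := (a1.1 h).2; omega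
    have b3 : ¬ r + 1 < Hh lam R (v + 1) j := by
      intro h
      obtain ⟨c1, c2⟩ := a3.1 h
      have c3 : (r + 1, j) ∈ lam \ mu := by
        simp only [Finset.mem_sdiff] at h1 ⊢
        exact ⟨c1, fun h => h1.2 (S.hm _ _ _ _ h (by omega) le_rfl)⟩
      have := a5 h1 c3
      rcases h2 with h2 | h2
      · exact h2 c3
      · omega
    omega
  · rintro ⟨h1, h2⟩
    obtain ⟨b1, b2⟩ := a2.1 (by omega)
    have b3 : ¬ R (r, j) ≤ v := fun h => by have := a1.2 ⟨b1, h⟩; omega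
    have b4 : (r, j) ∈ lam \ mu := by by_contra h; have := a6 h; omega
    refine ⟨⟨b4, ?_⟩, by omega⟩
    by_contra hc
    simp only [not_or, not_not] at hc
    have := a3.2 ⟨b9 hc.1, by omega⟩
    omega

include S in
lemma count_LL {R : Cell → ℕ} (hR : IsRPPOn (lam \ mu) R) (p : Cell → Prop) (v : ℕ) :
    (((LL (lam \ mu) R).filter p).map R).count (v + 1) =
    ((Finset.range (Wd (lam \ mu))).filter (fun j => Hh lam R v j < Hh lam R (v + 1) j ∧
      p (Hh lam R (v + 1) j - 1, j))).card := by
  have e1 : (((LL (lam \ mu) R).filter p).map R).count (v + 1) =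
      ((LL (lam \ mu) R).filter (fun c => p c ∧ R c = v + 1)).length := by
    rw [List.count, List.countP_map, List.countP_eq_length_filter, List.filter_filter]
    congr 1
    refine List.filter_congr fun c _ => ?_
    simp only [Function.comp]
    by_cases h1 : p c <;> by_cases h2 : R c = v + 1 <;> simp [h1, h2]
  rw [e1, ← List.toFinset_card_of_nodup ((LL_nodup _ _).filter _)]
  refine Finset.card_bij' (fun c _ => c.2) (fun j _ => (Hh lam R (v + 1) j - 1, j)) ?_ ?_ ?_ ?_
  · rintro ⟨a, b⟩ h
    simp only [List.mem_toFinset, List.mem_filter, mem_LL, decide_eq_true_eq] at h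
    obtain ⟨h1, h2, h3⟩ := h
    obtain ⟨g1, g2⟩ := (ret_iff S hR v a b).1 ⟨h1, h3⟩
    simp only [Finset.mem_filter, Finset.mem_range]
    refine ⟨Nat.lt_succ_of_le (Finset.le_sup (f := Prod.snd) h1.1), g1, ?_⟩
    rwa [← g2]
  · intro j h
    simp only [Finset.mem_filter, Finset.mem_range] at h
    simp only [List.mem_toFinset, List.mem_filter, mem_LL, decide_eq_true_eq]
    obtain ⟨g1, g2⟩ := (ret_iff S hR v _ j).2 ⟨h.2.1, rfl⟩
    exact ⟨g1, h.2.2, g2⟩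
  · rintro ⟨a, b⟩ h
    simp only [List.mem_toFinset, List.mem_filter, mem_LL, decide_eq_true_eq] at h
    obtain ⟨h1, h2, h3⟩ := h
    obtain ⟨g1, g2⟩ := (ret_iff S hR v a b).1 ⟨h1, h3⟩
    simp only [g2]
  · intro j h
    rfl

include S in
lemma count_wt {R : Cell → ℕ} (hR : IsRPPOn (lam \ mu) R) (v : ℕ) :
    (rppRowWord (lam \ mu) R).count (v + 1) = wtRPP (lam \ mu) R (v + 1) := by
  have := count_LL S hR (fun _ => True) v
  rw [rowWord_LL, wt_cnt]
  unfold cntC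
  simp only [decide_true, List.filter_true, and_true] at this
  rw [this]
  congr 1
  exact Finset.filter_congr fun j _ => (colC_iff S hR v j).symm

include S in
lemma Hh_anti' {R : Cell → ℕ} (hR : IsRPPOn (lam \ mu) R) (v j k : ℕ) (h : j ≤ k) :
    Hh lam R v k ≤ Hh lam R v j := by
  exact antitone_nat_of_succ_le (f := Hh lam R v) (Hh_anti S hR v) h

lemma yam_def (w : List ℕ) : IsYamanouchi w ↔
    ∀ k v, (w.drop k).count (v + 2) ≤ (w.drop k).count (v + 1) := by
  unfold IsYamanouchi
  have : (fun a b : ℕ => Classical.propDecidable (a = b)) = instDecidableEqNat :=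
    Subsingleton.elim _ _
  rw [this]

include S in
theorem yam_iff_good {R : Cell → ℕ} (hR : IsRPPOn (lam \ mu) R) :
    IsYamanouchi (rppRowWord (lam \ mu) R) ↔ GoodR (lam \ mu) R := by
  have key : ∀ v, (∀ k, (((LL (lam \ mu) R).map R).drop k).count (v + 2) ≤
      (((LL (lam \ mu) R).map R).drop k).count (v + 1)) ↔ ∀ J, ¬ viol (lam \ mu) R J v := by
    intro v
    have := two_yam (W := Wd (lam \ mu)) (Hh_anti' S hR (v + 1)) (Hh_anti' S hR (v + 2))
      (Hh_mono S hR (Nat.le_succ v)) (Hh_mono S hR (Nat.le_succ (v + 1)))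
    have e : (∀ J, ¬ viol (lam \ mu) R J v) ↔ ∀ J, ((Finset.Ico J (Wd (lam \ mu))).filter
        (fun j => Hh lam R (v + 1) j < Hh lam R (v + 2) j)).card ≤
      ((Finset.Ico J (Wd (lam \ mu))).filter (fun j => Hh lam R v j < Hh lam R (v + 1) j)).card := by
      refine forall_congr' fun J => ?_
      unfold viol cntC
      rw [not_lt, Finset.filter_congr (fun j _ => colC_iff S hR v j),
        Finset.filter_congr (fun j _ => colC_iff S hR (v + 1) j)]
    rw [e, ← this]
    constructor
    · intro h p hp
      obtain ⟨k, hk⟩ := filter_drop _ (LL_pw (lam \ mu) R) p hp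
      have := h k
      rw [← List.map_drop, ← hk, count_LL S hR, count_LL S hR] at this
      exact this
    · intro h k
      obtain ⟨p, hp, hk⟩ := drop_filter _ (LL_pw (lam \ mu) R) k
      rw [← List.map_drop, ← hk, count_LL S hR, count_LL S hR]
      exact h p hp
  unfold GoodR
  rw [rowWord_LL, yam_def]
  constructor
  · intro h j v
    exact (key v).1 (fun k => h k v) j
  · intro h k v
    exact (key v).2 (fun j => h j v) k

end


/-! ### Schur polynomials -/

lemma finsum_sub {α M : Type*} [AddCommMonoid M] (p : α → Prop) (F : α → M) (t : Finset α)
    (h : ∀ a, a ∈ t ↔ p a) : ∑ᶠ a : {a // p a}, F a.1 = ∑ a ∈ t, F a := by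
  have : p = fun a => a ∈ (t : Set α) := by funext a; exact propext (h a).symm
  subst this
  rw [← finsum_mem_coe_finset]
  exact finsum_set_coe_eq_finsum_mem (s := (t : Set α)) (f := F)

lemma ssyt_rpp {s : Finset Cell} {U : Cell → ℕ} (h : IsSSYTOn s U) : IsRPPOn s U :=
  ⟨h.1, h.2.1, h.2.2.1, fun i j a b => (h.2.2.2 i j a b).le⟩

lemma ssyt_iff {s : Finset Cell} {U : Cell → ℕ} :
    IsSSYTOn s U ↔ IsRPPOn s U ∧ ceqOn s U = 0 := by
  constructor
  · intro h
    refine ⟨ssyt_rpp h, ?_⟩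
    funext i
    unfold ceqOn
    simp only [Pi.zero_apply, Finset.card_eq_zero, Finset.eq_empty_iff_forall_notMem, Finset.mem_filter]
    rintro ⟨a, b⟩ ⟨hc, h1, h2, h3⟩
    have := h.2.2.2 a b hc h2
    simp only at h3
    omega
  · rintro ⟨h, h0⟩
    refine ⟨h.1, h.2.1, h.2.2.1, fun i j a b => ?_⟩
    refine lt_of_le_of_ne (h.2.2.2 i j a b) fun hc => ?_
    have h1 := congrFun h0 i
    unfold ceqOn at h1
    simp only [Pi.zero_apply, Finset.card_eq_zero, Finset.eq_empty_iff_forall_notMem, Finset.mem_filter] at h1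
    exact h1 (i, j) ⟨a, rfl, b, hc⟩

lemma ssyt_col {s : Finset Cell} (hs : IsPartitionShape s) {U : Cell → ℕ} (h : IsSSYTOn s U)
    {i k j : ℕ} (hik : i < k) (hk : (k, j) ∈ s) : U (i, j) < U (k, j) := by
  induction k, hik using Nat.le_induction with
  | base => exact h.2.2.2 i j (hs _ _ _ _ hk (by omega) le_rfl) hk
  | succ k hk' ih =>
    have h1 := hs _ _ k j hk (by omega) le_rfl
    exact (ih h1).trans (h.2.2.2 k j h1 hk)

lemma ssyt_ge {s : Finset Cell} (hs : IsPartitionShape s) {U : Cell → ℕ} (h : IsSSYTOn s U)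
    {i j : ℕ} (hi : (i, j) ∈ s) : i + 1 ≤ U (i, j) := by
  induction i with
  | zero => exact h.1 _ hi
  | succ i ih =>
    have h1 := hs _ _ i j hi (by omega) le_rfl
    have := ih h1
    have := h.2.2.2 i j h1 hi
    omega

lemma lt_Wd {s : Finset Cell} {i j : ℕ} (h : (i, j) ∈ s) : j < Wd s :=
  Nat.lt_succ_of_le (Finset.le_sup (f := Prod.snd) h)

theorem good_highest {s : Finset Cell} (hs : IsPartitionShape s) {U : Cell → ℕ}
    (h : IsSSYTOn s U) (hg : GoodR s U) : U = highestTabOf s := by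
  have key : ∀ m j, Wd s ≤ j + m → ∀ r, (r, j) ∈ s → U (r, j) = r + 1 := by
    intro m
    induction m with
    | zero => intro j hj r hr; have := lt_Wd hr; omega
    | succ m ih =>
      intro j hj
      have ih' : ∀ k, j < k → ∀ r, (r, k) ∈ s → U (r, k) = r + 1 := fun k hk => ih k (by omega)
      by_contra hc
      have hc' : ∃ r, (r, j) ∈ s ∧ U (r, j) ≠ r + 1 := by push Not at hc; exact hc
      obtain ⟨r, ⟨hr1, hr2⟩, hmin⟩ : ∃ r, ((r, j) ∈ s ∧ U (r, j) ≠ r + 1) ∧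
          ∀ i, i < r → ¬ ((i, j) ∈ s ∧ U (i, j) ≠ i + 1) :=
        ⟨Nat.find hc', Nat.find_spec hc', fun i hi => Nat.find_min hc' hi⟩
      have hge := ssyt_ge hs h hr1
      have hno : (r, j + 1) ∉ s := by
        intro h1
        have := h.2.2.1 r j hr1 h1
        have := ih' (j + 1) (by omega) r h1
        omega
      obtain ⟨v, hv⟩ : ∃ v, U (r, j) = v + 2 := ⟨U (r, j) - 2, by omega⟩
      refine hg j v ?_
      unfold viol cntC
      have e1 : (Finset.Ico j (Wd s)).filter (colC s U (v + 1)) = ∅ := by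
        rw [Finset.filter_eq_empty_iff]
        rintro k hk ⟨i, hi, hiv⟩
        have hk := (Finset.mem_Ico.1 hk).1
        rcases Nat.lt_or_ge j k with hjk | hjk
        · have := ih' k hjk i hi
          exact hno (hs _ _ _ _ hi (by omega) (by omega))
        · obtain rfl : k = j := by omega
          rcases Nat.lt_trichotomy i r with h1 | h1 | h1
          · have := hmin i h1
            have : U (i, k) = i + 1 := by by_contra h2; exact this ⟨hi, h2⟩
            omega
          · subst h1; omega
          · have := ssyt_col hs h h1 hi
            omega
      rw [e1, Finset.card_empty, Finset.card_pos]
      exact ⟨j, Finset.mem_filter.2 ⟨Finset.mem_Ico.2 ⟨le_rfl, lt_Wd hr1⟩, r, hr1, hv⟩⟩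
  funext ⟨r, j⟩
  unfold highestTabOf
  split_ifs with h1
  · exact key (Wd s) j (by omega) r h1
  · exact h.2.1 _ h1

lemma highest_ssyt {s : Finset Cell} (hs : IsPartitionShape s) : IsSSYTOn s (highestTabOf s) := by
  have hp : ∀ c ∈ s, highestTabOf s c = c.1 + 1 := fun c hc => by
    unfold highestTabOf; rw [if_pos hc]
  refine ⟨?_, ?_, ?_, ?_⟩
  · intro c hc; rw [hp c hc]; omega
  · intro c hc; unfold highestTabOf; rw [if_neg hc]
  · intro i j a b; rw [hp _ a, hp _ b]
  · intro i j a b; rw [hp _ a, hp _ b]; simp only; omega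

lemma highest_good {s : Finset Cell} (hs : IsPartitionShape s) : GoodR s (highestTabOf s) := by
  intro j v
  unfold viol cntC
  rw [not_lt]
  refine Finset.card_le_card fun k hk => ?_
  rw [Finset.mem_filter] at hk ⊢
  refine ⟨hk.1, ?_⟩
  obtain ⟨i, hi, hv⟩ := hk.2
  unfold highestTabOf at hv
  rw [if_pos hi] at hv
  simp only at hv
  have h1 : (v, k) ∈ s := hs _ _ _ _ hi (by omega) le_rfl
  refine ⟨v, h1, ?_⟩
  unfold highestTabOf
  rw [if_pos h1]

lemma wtS_eq {s : Finset Cell} (hs : IsPartitionShape s) {U : Cell → ℕ} (h : IsSSYTOn s U) (v : ℕ) :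
    wtS s U v = wtRPP s U v := by
  rw [wt_cnt]
  unfold wtS cntC
  have e : (∑ c ∈ s, if U c = v then 1 else 0) = (s.filter (fun c => U c = v)).card := by
    rw [Finset.card_filter]
  have e' : wtS s U v = (s.filter (fun c => U c = v)).card := by
    rw [← e]; unfold wtS
    exact Finset.sum_congr rfl fun c _ => by congr
  unfold wtS at e'
  rw [e']
  refine Finset.card_bij (fun c _ => c.2) ?_ ?_ ?_
  · rintro ⟨a, b⟩ hc
    rw [Finset.mem_filter] at hc ⊢
    exact ⟨Finset.mem_range.2 (lt_Wd hc.1), a, hc.1, hc.2⟩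
  · rintro ⟨a, b⟩ hc ⟨a', b'⟩ hc' hh
    simp only at hh
    subst hh
    rw [Finset.mem_filter] at hc hc'
    rcases Nat.lt_trichotomy a a' with h1 | h1 | h1
    · have := ssyt_col hs h h1 hc'.1
      omega
    · rw [h1]
    · have := ssyt_col hs h h1 hc.1
      omega
  · intro b hb
    rw [Finset.mem_filter] at hb
    obtain ⟨i, hi, hv⟩ := hb.2
    exact ⟨(i, b), Finset.mem_filter.2 ⟨hi, hv⟩, rfl⟩

theorem schur_id (n : ℕ) {s : Finset Cell} (hs : IsPartitionShape s) (hn : AtMostRows s n) :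
    liftX n (schurOf n s) * altD (MvPolynomial (Fin n) ℤ) n (fun _ => 0) =
      altD (MvPolynomial (Fin n) ℤ) n (wv s (highestTabOf s)) := by
  have S : Skew s ∅ := ⟨hs, by intro i j i' j' h; simp at h, by simp⟩
  have core := core_identity (K := MvPolynomial (Fin n) ℤ) S n (fun c => if c = 0 then 1 else 0)
  rw [Finset.sdiff_empty] at core
  have e1 : FF (MvPolynomial (Fin n) ℤ) s n (fun c => if c = 0 then 1 else 0) =
      liftX n (schurOf n s) := by
    unfold schurOf
    rw [finsum_sub (fun U : Cell → ℕ => IsSSYTOn s U ∧ ∀ c ∈ s, U c ≤ n)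
      (fun U => (∏ i : Fin n, MvPolynomial.X i ^ wtS s U ((i : ℕ) + 1) : XPoly n))
      ((RF s n).filter (fun U => ceqOn s U = 0))]
    · unfold liftX FF
      rw [map_sum, Finset.sum_filter]
      refine Finset.sum_congr rfl fun U hU => ?_
      simp only
      split_ifs with h0
      · have : IsSSYTOn s U := ssyt_iff.2 ⟨(mem_RF.1 hU).1, h0⟩
        rw [map_prod]
        simp only [map_one, one_mul, map_pow, MvPolynomial.map_X]
        unfold monW wv
        refine Finset.prod_congr rfl fun i _ => ?_
        rw [wtS_eq hs this]
      · simp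
    · intro U
      rw [Finset.mem_filter, mem_RF, ssyt_iff]
      tauto
  rw [e1] at core
  rw [core, Finset.sum_eq_single_of_mem (highestTabOf s)]
  · rw [if_pos (ssyt_iff.1 (highest_ssyt hs)).2]; simp
  · rw [Finset.mem_filter, mem_RF]
    refine ⟨⟨ssyt_rpp (highest_ssyt hs), ?_⟩, highest_good hs⟩
    intro c hc
    unfold highestTabOf
    rw [if_pos hc]
    exact hn c hc
  · intro U hU hne
    rw [Finset.mem_filter, mem_RF] at hU
    rw [if_neg, map_zero, zero_mul]
    intro h0
    exact hne (good_highest hs (ssyt_iff.2 ⟨hU.1.1, h0⟩) hU.2)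


/-! ### Knuth moves and Yamanouchi words -/

def Ym (w : List ℕ) : Prop := ∀ k v, (w.drop k).count (v + 2) ≤ (w.drop k).count (v + 1)

lemma Ym_cons (a : ℕ) (l : List ℕ) :
    Ym (a :: l) ↔ Ym l ∧ ∀ v, (a :: l).count (v + 2) ≤ (a :: l).count (v + 1) := by
  constructor
  · intro h
    exact ⟨fun k v => h (k + 1) v, fun v => h 0 v⟩
  · rintro ⟨h1, h2⟩ k v
    cases k with
    | zero => exact h2 v
    | succ k => exact h1 k v

lemma Ym_app (u l l' : List ℕ) (hp : ∀ v, l.count v = l'.count v) (h : Ym l ↔ Ym l') :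
    Ym (u ++ l) ↔ Ym (u ++ l') := by
  induction u with
  | nil => exact h
  | cons a u ih =>
    rw [List.cons_append, List.cons_append, Ym_cons, Ym_cons, ih]
    have e : ∀ v, (a :: (u ++ l)).count v = (a :: (u ++ l')).count v := by
      intro v
      rw [← List.cons_append, ← List.cons_append, List.count_append, List.count_append, hp]
    simp only [e]

lemma Ym_zero {w : List ℕ} (h : Ym w) (v : ℕ) : w.count (v + 2) ≤ w.count (v + 1) := h 0 v

set_option maxHeartbeats 1600000 in
lemma Ym_step {w w' : List ℕ} (h : KnuthStep w w') : Ym w ↔ Ym w' := by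
  cases h with
  | kxzy u w x y z h1 h2 =>
    refine Ym_app _ _ _ (fun v => by simp only [List.count_cons]; omega) ?_
    simp only [Ym_cons]
    constructor
    · rintro ⟨⟨⟨hw, a1⟩, a2⟩, a3⟩
      refine ⟨⟨⟨hw, a1⟩, fun v => ?_⟩, fun v => ?_⟩
      · have b0 := Ym_zero hw v
        have b1 := a1 v
        have b2 := a2 v
        have b3 := a3 v
        clear a1 a2 a3 hw
        simp only [List.count_cons, beq_iff_eq] at b1 b2 b3 ⊢
        split_ifs at b1 b2 b3 ⊢ <;> omega
      · have b3 := a3 v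
        clear a1 a2 a3 hw
        simp only [List.count_cons] at b3 ⊢
        omega
    · rintro ⟨⟨⟨hw, a1⟩, a2⟩, a3⟩
      refine ⟨⟨⟨hw, a1⟩, fun v => ?_⟩, fun v => ?_⟩
      · have b0 := Ym_zero hw v
        have b1 := a1 v
        have b2 := a2 v
        have b3 := a3 v
        clear a1 a2 a3 hw
        simp only [List.count_cons, beq_iff_eq] at b1 b2 b3 ⊢
        split_ifs at b1 b2 b3 ⊢ <;> omega
      · have b3 := a3 v
        clear a1 a2 a3 hw
        simp only [List.count_cons] at b3 ⊢
        omega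
  | kyxz u w x y z h1 h2 =>
    refine Ym_app _ _ _ (fun v => by simp only [List.count_cons]; omega) ?_
    simp only [Ym_cons]
    constructor
    · rintro ⟨⟨⟨hw, a1⟩, a2⟩, a3⟩
      refine ⟨⟨⟨hw, fun v => ?_⟩, fun v => ?_⟩, fun v => ?_⟩
      · have b0 := Ym_zero hw v
        have b1 := a1 v
        have b2 := a2 v
        have b3 := a3 v
        clear a1 a2 a3 hw
        simp only [List.count_cons, beq_iff_eq] at b1 b2 b3 ⊢
        split_ifs at b1 b2 b3 ⊢ <;> omega
      · have b3 := a2 v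
        clear a1 a2 a3 hw
        simp only [List.count_cons] at b3 ⊢
        omega
      · have b3 := a3 v
        clear a1 a2 a3 hw
        simp only [List.count_cons] at b3 ⊢
        omega
    · rintro ⟨⟨⟨hw, a1⟩, a2⟩, a3⟩
      refine ⟨⟨⟨hw, fun v => ?_⟩, fun v => ?_⟩, fun v => ?_⟩
      · have b0 := Ym_zero hw v
        have b1 := a1 v
        have b2 := a2 v
        have b3 := a3 v
        clear a1 a2 a3 hw
        simp only [List.count_cons, beq_iff_eq] at b1 b2 b3 ⊢
        split_ifs at b1 b2 b3 ⊢ <;> omega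
      · have b3 := a2 v
        clear a1 a2 a3 hw
        simp only [List.count_cons] at b3 ⊢
        omega
      · have b3 := a3 v
        clear a1 a2 a3 hw
        simp only [List.count_cons] at b3 ⊢
        omega

lemma yam_knuth {w w' : List ℕ} (h : KnuthEquiv w w') : IsYamanouchi w ↔ IsYamanouchi w' := by
  rw [yam_def, yam_def]
  change Ym w ↔ Ym w'
  unfold KnuthEquiv at h
  induction h with
  | rel x y h => exact Ym_step h
  | refl x => exact Iff.rfl
  | symm x y _ ih => exact ih.symm
  | trans x y z _ _ ih1 ih2 => exact ih1.trans ih2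

lemma reading_eq {s : Finset Cell} {P : Cell → ℕ} (h : IsSSYTOn s P) :
    readingWordOn s P = rppRowWord s P := by
  unfold readingWordOn rppRowWord rowWordOn
  congr 1
  refine List.map_congr_left fun i _ => ?_
  congr 1
  symm
  rw [List.filter_eq_self]
  intro j hj
  unfold rowList at hj
  simp only [List.mem_filter, decide_eq_true_eq] at hj ⊢
  by_cases h1 : (i + 1, j) ∈ s
  · right
    have := h.2.2.2 i j hj.2 h1
    omega
  · exact Or.inl h1

lemma rpp_row {s : Finset Cell} (lam mu : Finset Cell) (S : Skew lam mu) {R : Cell → ℕ}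
    (hR : IsRPPOn (lam \ mu) R) {i j k : ℕ} (hjk : j ≤ k) (hj : (i, j) ∈ lam \ mu)
    (hk : (i, k) ∈ lam \ mu) : R (i, j) ≤ R (i, k) := by
  induction k, hjk using Nat.le_induction with
  | base => exact le_rfl
  | succ k hjk ih =>
    have h1 : (i, k) ∈ lam \ mu := by
      rw [Finset.mem_sdiff] at *
      exact ⟨S.hl _ _ _ _ hk.1 le_rfl (by omega), fun h => hj.2 (S.hm _ _ _ _ h le_rfl hjk)⟩
    exact (ih h1).trans (hR.2.2.1 i k h1 hk)

lemma biword {lam mu : Finset Cell} (S : Skew lam mu) {R : Cell → ℕ}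
    (hR : IsRPPOn (lam \ mu) R) : IsBiword (rppHeights (lam \ mu) R) (rppRowWord (lam \ mu) R) := by
  rw [rowWord_LL, heights_LL]
  refine ⟨by simp, ?_, ?_, ?_⟩
  · intro x hx
    obtain ⟨c, _, rfl⟩ := List.mem_map.1 hx
    omega
  · intro x hx
    obtain ⟨c, hc, rfl⟩ := List.mem_map.1 hx
    exact hR.1 _ (mem_LL.1 hc).1
  · intro p hp
    rw [List.length_map] at hp
    have hb := List.pairwise_iff_getElem.1 (LL_pw (lam \ mu) R) p (p + 1) (by omega) hp (by omega)
    have m1 := mem_LL.1 (List.getElem_mem (l := LL (lam \ mu) R) (n := p) (by omega))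
    have m2 := mem_LL.1 (List.getElem_mem (l := LL (lam \ mu) R) (n := p + 1) hp)
    have g : ∀ (f : Cell → ℕ) q (hq : q < (LL (lam \ mu) R).length),
        ((LL (lam \ mu) R).map f).getD q 0 = f ((LL (lam \ mu) R)[q]) := by
      intro f q hq
      rw [List.getD_eq_getElem _ _ (by rw [List.length_map]; exact hq), List.getElem_map]
    rw [g _ _ hp, g _ _ (by omega), g _ _ hp, g _ _ (by omega)]
    generalize (LL (lam \ mu) R)[p] = c at *
    generalize (LL (lam \ mu) R)[p + 1] = d at *
    obtain ⟨a, b⟩ := c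
    obtain ⟨a', b'⟩ := d
    unfold before at hb
    simp only at *
    refine ⟨by omega, fun hlt => ?_⟩
    rcases hb with hb | ⟨rfl, hb⟩
    · omega
    · have := rpp_row (s := ∅) lam mu S hR hb.le m1.1 m2.1
      omega

lemma contentP' (B : BurgeData) {top bot : List ℕ} (h : IsBiword top bot) (v : ℕ) :
    wtS (B.out top bot).sh (B.out top bot).P v = bot.count v := by
  rw [B.contentP top bot h]
  have : (fun a b : ℕ => Classical.propDecidable (a = b)) = instDecidableEqNat :=
    Subsingleton.elim _ _
  rw [this]

section
variable {lam mu : Finset Cell} (S : Skew lam mu) (B : BurgeData)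

def bo (B : BurgeData) (s : Finset Cell) (R : Cell → ℕ) : BurgeOut := B.out (rppHeights s R) (rppRowWord s R)

include S in
lemma bo_part {R : Cell → ℕ} (hR : IsRPPOn (lam \ mu) R) : IsPartitionShape (bo B (lam \ mu) R).sh :=
  B.shape_part _ _ (biword S hR)

include S in
lemma bo_P {R : Cell → ℕ} (hR : IsRPPOn (lam \ mu) R) (hg : GoodR (lam \ mu) R) :
    (bo B (lam \ mu) R).P = highestTabOf (bo B (lam \ mu) R).sh := by
  have hb := biword S hR
  have hp := bo_part S B hR
  have hP : IsSSYTOn (bo B (lam \ mu) R).sh (bo B (lam \ mu) R).P := B.ssytP _ _ hb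
  have S' : Skew (bo B (lam \ mu) R).sh ∅ := ⟨hp, by intro i j i' j' h; simp at h, by simp⟩
  refine good_highest hp hP ?_
  have h1 : IsYamanouchi (readingWordOn (bo B (lam \ mu) R).sh (bo B (lam \ mu) R).P) :=
    (yam_knuth (B.knuthP _ _ hb)).2 ((yam_iff_good S hR).2 hg)
  rw [reading_eq hP] at h1
  have := (yam_iff_good S' (R := (bo B (lam \ mu) R).P) (by rw [Finset.sdiff_empty]; exact ssyt_rpp hP)).1
    (by rw [Finset.sdiff_empty]; exact h1)
  rwa [Finset.sdiff_empty] at this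

include S in
lemma bo_wt {R : Cell → ℕ} (hR : IsRPPOn (lam \ mu) R) (hg : GoodR (lam \ mu) R) (k : ℕ) :
    wv (bo B (lam \ mu) R).sh (highestTabOf (bo B (lam \ mu) R).sh) k = wv (lam \ mu) R k := by
  unfold wv
  rw [← wtS_eq (bo_part S B hR) (highest_ssyt (bo_part S B hR)), ← bo_P S B hR hg, ← count_wt S hR]
  exact contentP' B (biword S hR) _

include S in
lemma bo_rows {n : ℕ} {R : Cell → ℕ} (hR : R ∈ RF (lam \ mu) n) (hg : GoodR (lam \ mu) R) :
    AtMostRows (bo B (lam \ mu) R).sh n := by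
  intro c hc
  have hR' := mem_RF.1 hR
  have h1 := bo_wt S B hR'.1 hg c.1
  have h2 : wv (bo B (lam \ mu) R).sh (highestTabOf (bo B (lam \ mu) R).sh) c.1 ≠ 0 := by
    unfold wv
    rw [wt_cnt]
    unfold cntC
    rw [← Nat.pos_iff_ne_zero, Finset.card_pos]
    refine ⟨c.2, Finset.mem_filter.2 ⟨Finset.mem_range.2 (lt_Wd hc), c.1, hc, ?_⟩⟩
    unfold highestTabOf
    rw [if_pos hc]
  rw [h1] at h2
  unfold wv at h2
  rw [wt_cnt] at h2
  unfold cntC at h2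
  rw [← Nat.pos_iff_ne_zero, Finset.card_pos] at h2
  obtain ⟨j, hj⟩ := h2
  obtain ⟨i, hi, hv⟩ := (Finset.mem_filter.1 hj).2
  have := hR'.2 _ hi
  omega

include S in
theorem schur_bo {n : ℕ} {R : Cell → ℕ} (hR : R ∈ RF (lam \ mu) n) (hg : GoodR (lam \ mu) R) :
    liftX n (schurOf n (bo B (lam \ mu) R).sh) * altD (MvPolynomial (Fin n) ℤ) n (fun _ => 0) =
      altD (MvPolynomial (Fin n) ℤ) n (wv (lam \ mu) R) := by
  rw [schur_id n (bo_part S B (mem_RF.1 hR).1) (bo_rows S B hR hg)]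
  congr 1
  funext k
  exact bo_wt S B (mem_RF.1 hR).1 hg k

end


/-! ### The RPP is determined by its biword -/

lemma rowdet (l : List ℕ) (a a' c : ℕ → ℕ) (inb : ℕ → Prop)
    (ha : l.Pairwise (fun j k => a j ≤ a k)) (ha' : l.Pairwise (fun j k => a' j ≤ a' k))
    (hle : ∀ j ∈ l, inb j → a j ≤ c j) (hle' : ∀ j ∈ l, inb j → a' j ≤ c j)
    (h : (l.filter (fun j => decide (¬ inb j ∨ c j ≠ a j))).map a =
      (l.filter (fun j => decide (¬ inb j ∨ c j ≠ a' j))).map a') : ∀ j ∈ l, a j = a' j := by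
  induction l with
  | nil => simp
  | cons j l ih =>
    rw [List.pairwise_cons] at ha ha'
    have ih' := ih ha.2 ha'.2 (fun k hk => hle k (List.mem_cons_of_mem _ hk))
      (fun k hk => hle' k (List.mem_cons_of_mem _ hk))
    have l1 := hle j List.mem_cons_self
    have l2 := hle' j List.mem_cons_self
    by_cases k1 : ¬ inb j ∨ c j ≠ a j <;> by_cases k2 : ¬ inb j ∨ c j ≠ a' j
    · rw [List.filter_cons_of_pos (by simpa using k1), List.filter_cons_of_pos (by simpa using k2),
        List.map_cons, List.map_cons, List.cons.injEq] at h
      intro k hk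
      rcases List.mem_cons.1 hk with rfl | hk
      · exact h.1
      · exact ih' h.2 k hk
    · exfalso
      rw [List.filter_cons_of_pos (by simpa using k1), List.filter_cons_of_neg (by simpa using k2),
        List.map_cons] at h
      have hm : a j ∈ (l.filter (fun j => decide (¬ inb j ∨ c j ≠ a' j))).map a' := by
        rw [← h]; exact List.mem_cons_self
      obtain ⟨k, hk, hk2⟩ := List.mem_map.1 hm
      have := ha'.1 k (List.mem_filter.1 hk).1
      push Not at k2
      have := l1 k2.1
      have hq : c j ≠ a j := by
        rcases k1 with k1 | k1
        · exact absurd k2.1 k1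
        · exact k1
      omega
    · exfalso
      rw [List.filter_cons_of_neg (by simpa using k1), List.filter_cons_of_pos (by simpa using k2),
        List.map_cons] at h
      have hm : a' j ∈ (l.filter (fun j => decide (¬ inb j ∨ c j ≠ a j))).map a := by
        rw [h]; exact List.mem_cons_self
      obtain ⟨k, hk, hk2⟩ := List.mem_map.1 hm
      have := ha.1 k (List.mem_filter.1 hk).1
      push Not at k1
      have := l2 k1.1
      have hq : c j ≠ a' j := by
        rcases k2 with k2 | k2
        · exact absurd k1.1 k2
        · exact k2
      omega
    · rw [List.filter_cons_of_neg (by simpa using k1), List.filter_cons_of_neg (by simpa using k2)] at h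
      intro k hk
      rcases List.mem_cons.1 hk with rfl | hk
      · push Not at k1 k2
        rw [← k1.2, ← k2.2]
      · exact ih' h k hk

lemma rowL_LL (s : Finset Cell) (R : Cell → ℕ) (i : ℕ) :
    rowL s R i = (LL s R).filter (fun c => decide (c.1 = i)) := by
  have h1 := rowL_pw s R i
  have h2 : ((LL s R).filter (fun c => decide (c.1 = i))).Pairwise before := (LL_pw s R).filter _
  have nd : ∀ l : List Cell, l.Pairwise before → l.Nodup := fun l h =>
    h.imp (fun {a b} h => by rintro rfl; exact before_irr _ h)
  refine List.Perm.eq_of_pairwise (le := before) ?_ h1 h2 ?_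
  · intro a b _ _ x y
    unfold before at x y
    omega
  · rw [List.perm_ext_iff_of_nodup (nd _ h1) (nd _ h2)]
    intro c
    rw [mem_rowL, List.mem_filter, mem_LL, decide_eq_true_eq]

lemma row_words {s : Finset Cell} {R R' : Cell → ℕ} (h1 : rppHeights s R = rppHeights s R')
    (h2 : rppRowWord s R = rppRowWord s R') (i : ℕ) :
    (rowL s R i).map R = (rowL s R' i).map R' := by
  rw [heights_LL, heights_LL] at h1
  rw [rowWord_LL, rowWord_LL] at h2
  have e : ∀ Q : Cell → ℕ, (rowL s Q i).map Q =
      ((((LL s Q).map (fun c => c.1 + 1)).zip ((LL s Q).map Q)).filter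
        (fun x => decide (x.1 = i + 1))).map Prod.snd := by
    intro Q
    rw [rowL_LL, List.zip_map', List.filter_map, List.map_map]
    simp only [Function.comp_def, Nat.add_right_cancel_iff]
  rw [e, e, h1, h2]

theorem rpp_det {lam mu : Finset Cell} (S : Skew lam mu) {R R' : Cell → ℕ}
    (hR : IsRPPOn (lam \ mu) R) (hR' : IsRPPOn (lam \ mu) R')
    (h1 : rppHeights (lam \ mu) R = rppHeights (lam \ mu) R')
    (h2 : rppRowWord (lam \ mu) R = rppRowWord (lam \ mu) R') : R = R' := by
  have hsup : ∀ i j, (i, j) ∈ lam \ mu → i ≤ (lam \ mu).sup Prod.fst := fun i j h =>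
    Finset.le_sup (f := Prod.fst) h
  have key : ∀ m i, (lam \ mu).sup Prod.fst < i + m → ∀ j, R (i, j) = R' (i, j) := by
    intro m
    induction m with
    | zero =>
      intro i hi j
      have : (i, j) ∉ lam \ mu := fun h => by have := hsup i j h; omega
      rw [hR.2.1 _ this, hR'.2.1 _ this]
    | succ m ih =>
      intro i hi
      have hb := ih (i + 1) (by omega)
      have hw := row_words h1 h2 i
      unfold rowL at hw
      rw [List.map_map, List.map_map] at hw
      have hmem : ∀ j ∈ rowList (lam \ mu) i, (i, j) ∈ lam \ mu := by
        intro j hj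
        unfold rowList at hj
        simp only [List.mem_filter, decide_eq_true_eq] at hj
        exact hj.2
      have hpw : (rowList (lam \ mu) i).Pairwise (fun j k => j < k) := by
        unfold rowList
        exact List.Pairwise.filter _ List.pairwise_lt_range
      have hmono : ∀ Q : Cell → ℕ, IsRPPOn (lam \ mu) Q →
          (rowList (lam \ mu) i).Pairwise (fun j k => Q (i, j) ≤ Q (i, k)) := by
        intro Q hQ
        refine hpw.imp_of_mem ?_
        intro j k hj hk hjk
        exact rpp_row (s := ∅) lam mu S hQ hjk.le (hmem j hj) (hmem k hk)
      have := rowdet (rowList (lam \ mu) i) (fun j => R (i, j)) (fun j => R' (i, j))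
        (fun j => R (i + 1, j)) (fun j => (i + 1, j) ∈ lam \ mu) (hmono R hR) (hmono R' hR')
        (fun j hj hi => hR.2.2.2 i j (hmem j hj) hi)
        (fun j hj hi => by rw [hb]; exact hR'.2.2.2 i j (hmem j hj) hi)
        (by
          simp only [Function.comp_def] at hw
          simp only [← hb] at hw
          convert hw)
      intro j
      by_cases hj : (i, j) ∈ lam \ mu
      · refine this j ?_
        unfold rowList
        simp only [List.mem_filter, decide_eq_true_eq, List.mem_range]
        exact ⟨lt_Wd hj, hj⟩
      · rw [hR.2.1 _ hj, hR'.2.1 _ hj]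
  funext ⟨i, j⟩
  exact key ((lam \ mu).sup Prod.fst + 1) i (by omega) j

lemma ssyt_supp {s : Finset Cell} {Q : Cell → ℕ} (h : IsSSYTOn s Q) (c : Cell) :
    c ∈ s ↔ Q c ≠ 0 := by
  constructor
  · intro hc
    have := h.1 c hc
    omega
  · intro hc
    by_contra h'
    exact hc (h.2.1 c h')

theorem bo_inj {lam mu : Finset Cell} (S : Skew lam mu) (B : BurgeData) {R R' : Cell → ℕ}
    (hR : IsRPPOn (lam \ mu) R) (hR' : IsRPPOn (lam \ mu) R')
    (hg : GoodR (lam \ mu) R) (hg' : GoodR (lam \ mu) R')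
    (h : (bo B (lam \ mu) R).Q = (bo B (lam \ mu) R').Q) : R = R' := by
  have hb := biword S hR
  have hb' := biword S hR'
  have q1 : IsSSYTOn (bo B (lam \ mu) R).sh (bo B (lam \ mu) R).Q := B.ssytQ _ _ hb
  have q2 : IsSSYTOn (bo B (lam \ mu) R').sh (bo B (lam \ mu) R').Q := B.ssytQ _ _ hb'
  have hsh : (bo B (lam \ mu) R).sh = (bo B (lam \ mu) R').sh := by
    ext c
    rw [ssyt_supp q1, ssyt_supp q2, h]
  have hP : (bo B (lam \ mu) R).P = (bo B (lam \ mu) R').P := by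
    rw [bo_P S B hR hg, bo_P S B hR' hg', hsh]
  have he : bo B (lam \ mu) R = bo B (lam \ mu) R' := by
    revert hsh hP h
    generalize bo B (lam \ mu) R = x
    generalize bo B (lam \ mu) R' = y
    cases x
    cases y
    rintro h1 h2 h3
    simp only at h1 h2 h3
    subst h1 h2 h3
    rfl
  obtain ⟨e1, e2⟩ := B.inj _ _ _ _ hb hb' he
  exact rpp_det S hR hR' e1 e2


/-! ### Assembly -/

section
variable {lam mu : Finset Cell} (S : Skew lam mu) (B : BurgeData)

include S in
lemma compat_iff (n : ℕ) (q : BurgeOut) (T : Cell → ℕ) :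
    IsCompatibleRPP n B (lam \ mu) (fun _ => n) q T ↔
      (T ∈ RF (lam \ mu) n ∧ GoodR (lam \ mu) T) ∧ q = bo B (lam \ mu) T := by
  unfold IsCompatibleRPP
  constructor
  · rintro ⟨⟨h1, h2, h3, h4⟩, _⟩
    exact ⟨⟨mem_RF.2 ⟨h1, h2⟩, (yam_iff_good S h1).1 h3⟩, h4.symm⟩
  · rintro ⟨⟨h1, h2⟩, rfl⟩
    obtain ⟨h1, h3⟩ := mem_RF.1 h1
    refine ⟨⟨h1, h3, (yam_iff_good S h1).2 h2, rfl⟩, ?_⟩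
    rintro T'' ⟨g1, g2, g3, g4⟩
    exact bo_inj S B g1 h1 ((yam_iff_good S g1).1 g3) h2 g4

def GG (s : Finset Cell) (n : ℕ) : Finset (Cell → ℕ) := (RF s n).filter (GoodR s)

lemma ceq_zero {s : Finset Cell} {n : ℕ} (hn : AtMostRows s n) (R : Cell → ℕ) (r : ℕ) (hr : n ≤ r) :
    ceqOn s R r = 0 := by
  unfold ceqOn
  simp only [Finset.card_eq_zero, Finset.eq_empty_iff_forall_notMem, Finset.mem_filter]
  rintro c ⟨hc, h1, _⟩
  have := hn c hc
  omega

lemma ceq_ext {s : Finset Cell} {n : ℕ} (hn : AtMostRows s n) (R : Cell → ℕ) (α : Fin n → ℕ) :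
    (∀ r, ceqOn s R r = extendf n α r) ↔ (fun i : Fin n => ceqOn s R i) = α := by
  constructor
  · intro h
    funext i
    rw [h i]
    unfold extendf
    rw [dif_pos i.2]
  · rintro rfl r
    unfold extendf
    split_ifs with h
    · rfl
    · exact ceq_zero hn R r (by omega)

include S in
lemma inner_sum (n : ℕ) (hn : AtMostRows (lam \ mu) n) (α : Fin n → ℕ) :
    (∑ᶠ q : {q : BurgeOut × (Cell → ℕ) //
                   IsCompatibleRPP n B (lam \ mu) (fun _ => n) q.1 q.2 ∧
                   ∀ r, ceqOn (lam \ mu) q.2 r = extendf n α r},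
            liftX n (schurOf n q.1.1.sh)) =
    ∑ R ∈ (GG (lam \ mu) n).filter (fun R => (fun i : Fin n => ceqOn (lam \ mu) R i) = α),
      liftX n (schurOf n (bo B (lam \ mu) R).sh) := by
  rw [finsum_sub (fun q : BurgeOut × (Cell → ℕ) =>
      IsCompatibleRPP n B (lam \ mu) (fun _ => n) q.1 q.2 ∧
                   ∀ r, ceqOn (lam \ mu) q.2 r = extendf n α r)
      (fun q => liftX n (schurOf n q.1.sh))
      (((GG (lam \ mu) n).filter (fun R => (fun i : Fin n => ceqOn (lam \ mu) R i) = α)).image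
        (fun R => (bo B (lam \ mu) R, R)))]
  · rw [Finset.sum_image]
    intro x _ y _ h
    exact (Prod.mk.inj h).2
  · rintro ⟨q, T⟩
    simp only [Finset.mem_image, Finset.mem_filter, GG, Prod.mk.injEq]
    rw [compat_iff S B, ceq_ext hn]
    constructor
    · rintro ⟨R, ⟨h1, h2⟩, rfl, rfl⟩
      exact ⟨⟨h1, rfl⟩, h2⟩
    · rintro ⟨⟨h1, rfl⟩, h2⟩
      exact ⟨T, ⟨h1, h2⟩, rfl, rfl⟩

include S in
lemma rhs_eq (n : ℕ) (hn : AtMostRows (lam \ mu) n) :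
    (∑ᶠ α : Fin n → ℕ,
        tMono n (extendf n α) *
          ∑ᶠ q : {q : BurgeOut × (Cell → ℕ) //
                   IsCompatibleRPP n B (lam \ mu) (fun _ => n) q.1 q.2 ∧
                   ∀ r, ceqOn (lam \ mu) q.2 r = extendf n α r},
            liftX n (schurOf n q.1.1.sh)) =
    ∑ R ∈ GG (lam \ mu) n, tMono n (ceqOn (lam \ mu) R) *
      liftX n (schurOf n (bo B (lam \ mu) R).sh) := by
  simp only [inner_sum S B n hn]
  have hmaps : ∀ R ∈ GG (lam \ mu) n, (fun i : Fin n => ceqOn (lam \ mu) R i) ∈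
      (GG (lam \ mu) n).image (fun R => (fun i : Fin n => ceqOn (lam \ mu) R i)) :=
    fun R hR => Finset.mem_image_of_mem _ hR
  rw [finsum_eq_sum_of_support_subset (s := (GG (lam \ mu) n).image
    (fun R => (fun i : Fin n => ceqOn (lam \ mu) R i))), ← Finset.sum_fiberwise_of_maps_to hmaps]
  · refine Finset.sum_congr rfl fun α _ => ?_
    rw [Finset.mul_sum]
    refine Finset.sum_congr rfl fun R hR => ?_
    congr 1
    have := (ceq_ext hn R α).2 (Finset.mem_filter.1 hR).2
    congr 1
    funext r
    exact (this r).symm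
  · intro α hα
    by_contra hc
    apply hα
    simp only
    rw [Finset.filter_eq_empty_iff.2, Finset.sum_empty, mul_zero]
    intro R hR he
    apply hc
    rw [Finset.coe_image]
    exact ⟨R, hR, he⟩

include S in
theorem main_aux' (n : ℕ) (hn : AtMostRows lam n) :
    gFlagged n (lam \ mu) (fun _ => n) =
      ∑ᶠ α : Fin n → ℕ,
        tMono n (extendf n α) *
          ∑ᶠ q : {q : BurgeOut × (Cell → ℕ) //
                   IsCompatibleRPP n B (lam \ mu) (fun _ => n) q.1 q.2 ∧
                   ∀ r, ceqOn (lam \ mu) q.2 r = extendf n α r},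
            liftX n (schurOf n q.1.1.sh) := by
  rw [rhs_eq S B n (fun c hc => hn c (Finset.mem_sdiff.1 hc).1)]
  refine mul_right_cancel₀ (altD_ne_zero (K := MvPolynomial (Fin n) ℤ) n) ?_
  have core := core_identity (K := MvPolynomial (Fin n) ℤ) S n
    (fun c => ∏ i : Fin n, MvPolynomial.X i ^ c (i : ℕ))
  have e : gFlagged n (lam \ mu) (fun _ => n) =
      FF (MvPolynomial (Fin n) ℤ) (lam \ mu) n (fun c => ∏ i : Fin n, MvPolynomial.X i ^ c (i : ℕ)) := by
    unfold gFlagged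
    rw [finsum_sub (fun R : Cell → ℕ => IsRPPOn (lam \ mu) R ∧ RespectsFlagS (lam \ mu) (fun _ => n) R)
      (fun R => tMono n (ceqOn (lam \ mu) R) *
        ∏ i : Fin n, MvPolynomial.X i ^ wtRPP (lam \ mu) R ((i : ℕ) + 1)) (RF (lam \ mu) n)
      (fun R => mem_RF)]
    rfl
  rw [e, core, Finset.sum_mul]
  refine Finset.sum_congr rfl fun R hR => ?_
  obtain ⟨h1, h2⟩ := Finset.mem_filter.1 hR
  rw [mul_assoc, schur_bo S B h1 h2]
  rfl

end

theorem main_gen {lam mu : Finset Cell} (S : Skew lam mu) (B : BurgeData) (n : ℕ)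
    (hn : AtMostRows lam n) (s : Finset Cell) (hs : ∀ c, c ∈ s ↔ c ∈ lam ∧ c ∉ mu) :
    gFlagged n s (fun _ => n) =
      ∑ᶠ α : Fin n → ℕ,
        tMono n (extendf n α) *
          ∑ᶠ q : {q : BurgeOut × (Cell → ℕ) //
                   IsCompatibleRPP n B s (fun _ => n) q.1 q.2 ∧
                   ∀ r, ceqOn s q.2 r = extendf n α r},
            liftX n (schurOf n q.1.1.sh) := by
  obtain rfl : s = lam \ mu := by
    ext c
    rw [hs, Finset.mem_sdiff]
  exact main_aux' S B n hn

end Mine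

/-- The refined dual stable Grothendieck polynomial has the tableaux
Schur expansion `g̃_{λ/μ}(x; t) = Σ_{Q ∈ 𝕋(λ/μ)} t^{ceq(Q)} s_{sh(Q)}(x)`. -/
theorem gtilde_schur_expansion
    (n : ℕ) (B : BurgeData)
    (lam mu : Finset Cell)
    (hlam : IsPartitionShape lam) (hmu : IsPartitionShape mu)
    (hsub : mu ⊆ lam) (hlamn : AtMostRows lam n) (hmun : AtMostRows mu n) :
    gFlagged n (lam \ mu) (fun _ => n) =
      ∑ᶠ α : Fin n → ℕ,
        tMono n (extendf n α) *
          ∑ᶠ q : {q : BurgeOut × (Cell → ℕ) //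
                   IsCompatibleRPP n B (lam \ mu) (fun _ => n) q.1 q.2 ∧
                   ∀ r, ceqOn (lam \ mu) q.2 r = extendf n α r},
            liftX n (schurOf n q.1.1.sh) := by
  exact main_gen ⟨hlam, hmu, hsub⟩ B n hlamn _ (fun c => by simp only [Finset.mem_sdiff])

end SkewG
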